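/- Suppose ν satisfies the Carleman condition, Assumption (interior): G(x,y) ⪰ λ I_q on O₁ × O₂ for some λ > 0 and open bounded O₁ ⊂ X, O₂ ⊂ Y, and F(x) ∈ S[x]^p is positive semidefinite on X ∩ [−1,1]ⁿ. Then for every ε > 0 there exist ℓ₁, ℓ₂ ∈ ℕ such that for all d ≥ ℓ₁ and k ≥ ℓ₂, F(x) + ε(1 + Σ_{i=1}^n x_i^{2d}) I_p = Σ₀(x) + ∫_Y ⟨Σ(x,y), G(x,y)⟩_p dν(y) for some SOS matrices Σ₀ ∈ S[x]^p with deg Σ₀ ≤ 2d and Σ ∈ S[x,y]^{pq} with deg_x Σ ≤ 2d − 2d(G) and deg_y Σ ≤ 2k. -/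

import Mathlib

open MeasureTheory MvPolynomial Matrix Finset

noncomputable section

/-- A polynomial matrix is an SOS matrix if it factors as `Tᵀ * T`. -/
def IsSOSMatrix {σ : Type*} {ι : Type*} [Fintype ι]
    (M : Matrix ι ι (MvPolynomial σ ℝ)) : Prop :=
  ∃ (l : ℕ) (T : Matrix (Fin l) ι (MvPolynomial σ ℝ)), M = Tᵀ * T

/-- A polynomial is a sum of squares. -/
def IsSOSPoly {σ : Type*} (f : MvPolynomial σ ℝ) : Prop :=
  ∃ (l : ℕ) (g : Fin l → MvPolynomial σ ℝ), f = ∑ i, (g i) ^ 2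

/-- The block-trace bilinear map `⟨A,B⟩_p = Tr_p (Aᵀ (I_p ⊗ B))`. -/
def lram {R : Type*} [CommSemiring R] {ιp ιq : Type*} [Fintype ιq]
    (A : Matrix (ιp × ιq) (ιp × ιq) R) (B : Matrix ιq ιq R) :
    Matrix ιp ιp R :=
  Matrix.of fun i j => ∑ a : ιq, ∑ c : ιq, A (j, c) (i, a) * B c a

/-- The `x`-part of an exponent in the variables `x ⊕ y`. -/
def xPart {n m : ℕ} (d : (Fin n ⊕ Fin m) →₀ ℕ) : Fin n →₀ ℕ :=
  Finsupp.comapDomain Sum.inl d Sum.inl_injective.injOn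

/-- Integrate out the `y`-variables of a polynomial in `(x, y)` against the measure `ν`:
`∫_Y Σ_β H_β(x) y^β dν := Σ_β H_β(x) ∫_Y y^β dν`. -/
def integY {n m : ℕ} (ν : Measure (Fin m → ℝ))
    (q : MvPolynomial (Fin n ⊕ Fin m) ℝ) : MvPolynomial (Fin n) ℝ :=
  ∑ d ∈ q.support, MvPolynomial.monomial (xPart d)
    (q.coeff d * ∫ y, ∏ j : Fin m, (y j) ^ (d (Sum.inr j)) ∂ν)

/-- All polynomial moments of `ν` are finite. -/
def momentsFinite {m : ℕ} (ν : Measure (Fin m → ℝ)) : Prop :=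
  ∀ h : MvPolynomial (Fin m) ℝ, Integrable (fun y => |MvPolynomial.eval y h|) ν

/-- `ν` has support exactly `Y`. -/
def hasSupport {m : ℕ} (ν : Measure (Fin m → ℝ)) (Y : Set (Fin m → ℝ)) : Prop :=
  ν Yᶜ = 0 ∧ ∀ U : Set (Fin m → ℝ), IsOpen U → (U ∩ Y).Nonempty → 0 < ν U

/-- The multivariate Carleman condition on `ν`. -/
def Carleman {m : ℕ} (ν : Measure (Fin m → ℝ)) : Prop :=
  ∀ j : Fin m, ¬ Summable (fun d : ℕ =>
    (∫ y, (y j) ^ (2 * (d + 1)) ∂ν) ^ (-(1 : ℝ) / (2 * (d + 1))))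

/-- Evaluate a polynomial matrix at a point. -/
def evalMat {σ : Type*} {ι : Type*} (x : σ → ℝ)
    (M : Matrix ι ι (MvPolynomial σ ℝ)) : Matrix ι ι ℝ :=
  M.map (MvPolynomial.eval x)

/-- The spectral (L²-operator) norm of a real matrix. -/
def specNorm {ι : Type*} [Fintype ι] [DecidableEq ι] (A : Matrix ι ι ℝ) : ℝ :=
  ‖(Matrix.toEuclideanLin A).toContinuousLinearMap‖

/-- Degree of a polynomial matrix. -/
def matDeg {ι σ : Type*} [Fintype ι] (M : Matrix ι ι (MvPolynomial σ ℝ)) : ℕ :=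
  Finset.univ.sup fun i => Finset.univ.sup fun j => (M i j).totalDegree

/-- Degree in `x` of a polynomial in `(x,y)`. -/
def degX {n m : ℕ} (q : MvPolynomial (Fin n ⊕ Fin m) ℝ) : ℕ :=
  q.support.sup fun d => ∑ i : Fin n, d (Sum.inl i)

/-- Degree in `y` of a polynomial in `(x,y)`. -/
def degY {n m : ℕ} (q : MvPolynomial (Fin n ⊕ Fin m) ℝ) : ℕ :=
  q.support.sup fun d => ∑ j : Fin m, d (Sum.inr j)

def matDegX {ι : Type*} {n m : ℕ} [Fintype ι]
    (M : Matrix ι ι (MvPolynomial (Fin n ⊕ Fin m) ℝ)) : ℕ :=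
  Finset.univ.sup fun i => Finset.univ.sup fun j => degX (M i j)

def matDegY {ι : Type*} {n m : ℕ} [Fintype ι]
    (M : Matrix ι ι (MvPolynomial (Fin n ⊕ Fin m) ℝ)) : ℕ :=
  Finset.univ.sup fun i => Finset.univ.sup fun j => degY (M i j)

/-- Homogeneity in `x` of a polynomial in `(x,y)`. -/
def IsHomogeneousX {n m : ℕ} (q : MvPolynomial (Fin n ⊕ Fin m) ℝ) (k : ℕ) : Prop :=
  ∀ d ∈ q.support, ∑ i : Fin n, d (Sum.inl i) = k

/-- Positive semidefiniteness of the full (infinite) moment matrix `M(S)`: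
every finite principal block submatrix is PSD. -/
def MomentPSD {n p : ℕ} (S : (Fin n →₀ ℕ) → Matrix (Fin p) (Fin p) ℝ) : Prop :=
  ∀ (N : ℕ) (idx : Fin N → (Fin n →₀ ℕ)),
    (Matrix.of fun a b : Fin N × Fin p => S (idx a.1 + idx b.1) a.2 b.2).PosSemidef

/-- Exponents of degree at most `d` in `n` variables. -/
def Expo (n d : ℕ) := {a : Fin n → Fin (d + 1) // ∑ i, (a i : ℕ) ≤ d}

instance (n d : ℕ) : Fintype (Expo n d) := by unfold Expo; infer_instance
instance (n d : ℕ) : DecidableEq (Expo n d) := by unfold Expo; infer_instance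

def expF {n d : ℕ} (a : Fin n → Fin (d + 1)) : Fin n →₀ ℕ :=
  Finsupp.equivFunOnFinite.symm (fun i => (a i : ℕ))

/-- Truncated moment matrix `M_d(S)`. -/
def momentMat {n p : ℕ} (S : (Fin n →₀ ℕ) → Matrix (Fin p) (Fin p) ℝ) (d : ℕ) :
    Matrix (Expo n d × Fin p) (Expo n d × Fin p) ℝ :=
  Matrix.of fun a b => S (expF a.1.1 + expF b.1.1) a.2 b.2

/-- Truncated localizing matrix `M^ν_{d,k}(G S)`. -/
def locMat {n m p q : ℕ} (ν : Measure (Fin m → ℝ))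
    (G : Matrix (Fin q) (Fin q) (MvPolynomial (Fin n ⊕ Fin m) ℝ))
    (S : (Fin n →₀ ℕ) → Matrix (Fin p) (Fin p) ℝ) (d k : ℕ) :
    Matrix ((Expo n d × Expo m k) × (Fin p × Fin q))
           ((Expo n d × Expo m k) × (Fin p × Fin q)) ℝ :=
  Matrix.of fun r c =>
    ∑ e ∈ (G r.2.2 c.2.2).support,
      (∫ y, ∏ j : Fin m, (y j) ^ (e (Sum.inr j) + (r.1.2.1 j : ℕ) + (c.1.2.1 j : ℕ)) ∂ν) *
      ((G r.2.2 c.2.2).coeff e *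
        S (expF r.1.1.1 + expF c.1.1.1 + xPart e) r.2.1 c.2.1)

/-- The Riesz functional `L_S(H) = Σ_α tr(H_α S_α)`. -/
def RieszL {n p : ℕ} (S : (Fin n →₀ ℕ) → Matrix (Fin p) (Fin p) ℝ)
    (H : Matrix (Fin p) (Fin p) (MvPolynomial (Fin n) ℝ)) : ℝ :=
  ∑ i, ∑ j, ∑ α ∈ (H i j).support, (H i j).coeff α * S α j i

end

/-! If certificates fail to exist at arbitrarily high levels `(d, k)`, separate
`F + ε (1 + ∑ xᵢ^{2d}) I` from the cone of certified matrices at each such level. On symmetric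
matrices of degree at most `2d` the matrix `(1 + ∑ xᵢ^{2d}) I` is an order unit, and a separating
functional normalized there is bounded by `1` on all monomials. An ultrafilter limit `L` is
therefore still bounded by `1` on monomials, nonnegative on all `Σ₀ + ∫ ⟨Σ, G⟩ dν`, and satisfies
`L F ≤ -ε`. Bounded moments make `L` positive also after multiplication by `1 ± xᵢ`; the
normalized functionals with this positivity form a compact convex set whose extreme points are
matrix point masses `W δ_c` with `c ∈ [-1, 1]ⁿ`. For such a point mass, positivity on the
`∫ ⟨Σ, G⟩ dν` forces `G(c, y) ⪰ 0` for `y ∈ Y`: by Carleman's condition Fourier transforms against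
`ν` are quasianalytic, so polynomials are dense in `L²(ν)` and can localize at `y`. Hence
`F(c) ⪰ 0`, all extreme points are nonnegative at `F`, and by Krein–Milman so is `L`. -/

/-! ### Quasianalyticity -/

section Quasianalytic

variable {E : Type*} [NormedAddCommGroup E] [NormedSpace ℝ E] {c : ℕ → ℝ → E}

theorem hasDerivAt_pow_div_factorial (k : ℕ) (x : ℝ) :
    HasDerivAt (fun x : ℝ => x ^ (k + 1) / (k + 1).factorial) (x ^ k / k.factorial) x := by
  refine ((hasDerivAt_pow (k + 1) x).div_const _).congr_deriv ?_
  rw [Nat.factorial_succ]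
  push_cast
  field_simp [k.cast_add_one_ne_zero (R := ℝ)]

theorem hasDerivAt_sum_pow_div_factorial_smul (v : ℕ → E) (k : ℕ) (x : ℝ) :
    HasDerivAt (fun x : ℝ => ∑ j ∈ range (k + 1), (x ^ j / j.factorial) • v j)
      (∑ j ∈ range k, (x ^ j / j.factorial) • v (j + 1)) x := by
  simp_rw [sum_range_succ', pow_zero]
  exact (HasDerivAt.fun_sum fun j _ =>
    (hasDerivAt_pow_div_factorial j x).smul_const (v (j + 1))).add_const _

theorem norm_sub_taylor_sum_le_of_nonneg (hc : ∀ n s, HasDerivAt (c n) (c (n + 1) s) s)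
    {k : ℕ} (s : ℝ) {B h : ℝ} (hh : 0 ≤ h) :
    ∀ {n : ℕ}, (∀ x, ‖c (n + k) x‖ ≤ B) →
      ‖c n (s + h) - ∑ j ∈ range k, (h ^ j / j.factorial) • c (n + j) s‖ ≤
        h ^ k / k.factorial * B := by
  induction k generalizing h with
  | zero => intro n hB; simpa using hB (s + h)
  | succ k ih =>
    intro n hB
    have hderiv (x : ℝ) : HasDerivAt
        (fun x => c n (s + x) - ∑ j ∈ range (k + 1), (x ^ j / j.factorial) • c (n + j) s)
        (c (n + 1) (s + x) - ∑ j ∈ range k, (x ^ j / j.factorial) • c (n + 1 + j) s) x := by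
      simpa only [add_assoc, add_comm 1] using ((hc n (s + x)).comp_const_add s x).fun_sub
        (hasDerivAt_sum_pow_div_factorial_smul (fun j => c (n + j) s) k x)
    refine image_norm_le_of_norm_deriv_right_le_deriv_boundary (a := 0) (b := h)
      (B := fun x : ℝ => x ^ (k + 1) / (k + 1).factorial * B)
      (fun x _ => (hderiv x).continuousAt.continuousWithinAt)
      (fun x _ => (hderiv x).hasDerivWithinAt) (by simp [sum_range_succ'])
      (fun x => (hasDerivAt_pow_div_factorial k x).mul_const B)
      (fun x hx => ih hx.1 fun y => ?_) ⟨hh, le_rfl⟩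
    simpa only [add_assoc, add_comm 1] using hB y

theorem norm_sub_taylor_sum_le (hc : ∀ n s, HasDerivAt (c n) (c (n + 1) s) s)
    {k n : ℕ} (s h : ℝ) {B : ℝ} (hB : ∀ x, ‖c (n + k) x‖ ≤ B) :
    ‖c n (s + h) - ∑ j ∈ range k, (h ^ j / j.factorial) • c (n + j) s‖ ≤
      |h| ^ k / k.factorial * B := by
  rcases le_total 0 h with hh | hh
  · rw [abs_of_nonneg hh]
    exact norm_sub_taylor_sum_le_of_nonneg hc s hh hB
  · have hrefl := norm_sub_taylor_sum_le_of_nonneg (c := fun n s => (-1 : ℝ) ^ n • c n (-s))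
      (fun n s => by
        simpa [pow_succ, Function.comp_def] using
          ((hc n (-s)).scomp s (hasDerivAt_neg s)).fun_const_smul ((-1 : ℝ) ^ n))
      (n := n) (k := k) (B := B) (-s) (neg_nonneg.2 hh) (fun x => by simpa [norm_smul] using hB _)
    have hterm (j : ℕ) : ((-h) ^ j / j.factorial) • (-1 : ℝ) ^ (n + j) • c (n + j) s =
        (-1 : ℝ) ^ n • (h ^ j / j.factorial) • c (n + j) s := by
      rw [smul_smul, smul_smul, pow_add, neg_pow h]
      congr 1
      linear_combination (-1) ^ n * (h ^ j / j.factorial) * (Even.neg_one_pow ⟨j, rfl⟩ :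
        (-1 : ℝ) ^ (j + j) = 1)
    simp_rw [neg_add_rev, neg_neg, hterm, ← smul_sum, ← smul_sub, norm_smul] at hrefl
    simpa [abs_of_nonpos hh, add_comm] using hrefl

variable {M ρ : ℕ → ℝ}

/-- Bang's measure of smallness at `s` for a function with successive derivatives `c n` bounded by
`M n`: the derivatives of order `n ≤ N` are smaller than their bounds by a factor `exp (N - n)`. -/
def IsBangSmall (c : ℕ → ℝ → E) (M : ℕ → ℝ) (N : ℕ) (s : ℝ) : Prop :=
  ∀ n ≤ N, ‖c n s‖ ≤ Real.exp (n - N) * M n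

theorem le_mul_pow_of_forall_le_mul (hM : ∀ n, 0 ≤ M n) (hρ : ∀ n, 0 ≤ ρ n) (hmono : Monotone ρ)
    (hMρ : ∀ n, M (n + 1) ≤ ρ n * M n) (N n : ℕ) :
    ∀ {j : ℕ}, n + j ≤ N + 1 → M (n + j) ≤ M n * ρ N ^ j
  | 0, _ => by simp
  | j + 1, hj => calc
      M (n + (j + 1)) ≤ ρ (n + j) * M (n + j) := hMρ (n + j)
      _ ≤ ρ N * (M n * ρ N ^ j) :=
        mul_le_mul (hmono (by omega)) (le_mul_pow_of_forall_le_mul hM hρ hmono hMρ N n (by omega))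
          (hM _) (hρ _)
      _ = M n * ρ N ^ (j + 1) := by ring

theorem pow_div_factorial_mul_exp_mul_le (hM : ∀ n, 0 ≤ M n) (hρ : ∀ n, 0 ≤ ρ n)
    (hmono : Monotone ρ) (hMρ : ∀ n, M (n + 1) ≤ ρ n * M n) {N n j : ℕ} {t : ℝ} (ht : 0 ≤ t)
    (hj : n + j ≤ N + 1) :
    t ^ j / j.factorial * (Real.exp ((n + j : ℕ) - (N + 1 : ℕ)) * M (n + j)) ≤
      Real.exp (n - (N + 1 : ℕ)) * M n * ((Real.exp 1 * t * ρ N) ^ j / j.factorial) := by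
  have hexp : Real.exp ((n + j : ℕ) - (N + 1 : ℕ)) =
      Real.exp (n - (N + 1 : ℕ)) * Real.exp 1 ^ j := by
    rw [← Real.exp_nat_mul, ← Real.exp_add]; congr 1; push_cast; ring
  calc t ^ j / j.factorial * (Real.exp ((n + j : ℕ) - (N + 1 : ℕ)) * M (n + j))
      ≤ t ^ j / j.factorial * (Real.exp (n - (N + 1 : ℕ)) * Real.exp 1 ^ j *
          (M n * ρ N ^ j)) := by
        rw [hexp]
        gcongr
        exact le_mul_pow_of_forall_le_mul hM hρ hmono hMρ N n hj
    _ = Real.exp (n - (N + 1 : ℕ)) * M n * ((Real.exp 1 * t * ρ N) ^ j / j.factorial) := by ring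

/-- By Taylor's formula at `s`,
`‖c n (s + h)‖ ≤ exp (n - (N + 1)) * M n * exp (e * |h| * ρ N)`. -/
theorem IsBangSmall.add {N : ℕ} {s h : ℝ} (hs : IsBangSmall c M (N + 1) s)
    (hc : ∀ n s, HasDerivAt (c n) (c (n + 1) s) s) (hcM : ∀ n s, ‖c n s‖ ≤ M n)
    (hρ : ∀ n, 0 < ρ n) (hmono : Monotone ρ) (hMρ : ∀ n, M (n + 1) ≤ ρ n * M n)
    (hh : |h| ≤ (Real.exp 1)⁻¹ * (ρ N)⁻¹) : IsBangSmall c M N (s + h) := by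
  have hM (n : ℕ) : 0 ≤ M n := (norm_nonneg _).trans (hcM n 0)
  intro n hn
  obtain ⟨k, hk⟩ : ∃ k, n + k = N + 1 := ⟨N + 1 - n, by omega⟩
  set a : ℝ := Real.exp 1 * |h| * ρ N
  set D : ℝ := Real.exp (n - (N + 1 : ℕ)) * M n with hD
  have hD0 : 0 ≤ D := mul_nonneg (Real.exp_pos _).le (hM n)
  have ha0 : 0 ≤ a := by have := (hρ N).le; positivity
  have ha1 : a ≤ 1 := calc
    Real.exp 1 * |h| * ρ N ≤ Real.exp 1 * ((Real.exp 1)⁻¹ * (ρ N)⁻¹) * ρ N := by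
      have := (hρ N).le
      gcongr
    _ = 1 := by field_simp [(hρ N).ne']
  have hterm (j : ℕ) (hj : j ≤ k) :
      |h| ^ j / j.factorial * (Real.exp ((n + j : ℕ) - (N + 1 : ℕ)) * M (n + j)) ≤
        D * (a ^ j / j.factorial) :=
    pow_div_factorial_mul_exp_mul_le hM (fun i => (hρ i).le) hmono hMρ (abs_nonneg h) (by omega)
  have hrem : ‖c n (s + h) - ∑ j ∈ range k, (h ^ j / j.factorial) • c (n + j) s‖ ≤
      D * (a ^ k / k.factorial) :=
    (norm_sub_taylor_sum_le hc s h (hcM _)).trans (by simpa [hk] using hterm k le_rfl)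
  have hsum : ‖∑ j ∈ range k, (h ^ j / j.factorial) • c (n + j) s‖ ≤
      ∑ j ∈ range k, D * (a ^ j / j.factorial) := by
    refine norm_sum_le_of_le _ fun j hj => le_trans ?_ (hterm j (mem_range.1 hj).le)
    rw [norm_smul, norm_div, norm_pow, Real.norm_eq_abs, RCLike.norm_natCast]
    exact mul_le_mul_of_nonneg_left (hs (n + j) (by have := mem_range.1 hj; omega))
      (by positivity)
  calc ‖c n (s + h)‖
      ≤ ∑ j ∈ range k, D * (a ^ j / j.factorial) + D * (a ^ k / k.factorial) :=
        (norm_le_norm_add_norm_sub' _ _).trans (add_le_add hsum hrem)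
    _ = D * ∑ j ∈ range (k + 1), a ^ j / j.factorial := by rw [← sum_range_succ, mul_sum]
    _ ≤ D * Real.exp 1 := by
        gcongr
        exact (Real.sum_le_exp_of_nonneg ha0 _).trans (Real.exp_le_exp.2 ha1)
    _ = Real.exp (n - N) * M n := by
        rw [hD, mul_right_comm, ← Real.exp_add]; congr 2; push_cast; ring

theorem IsBangSmall.add_of_abs_le_sum (hc : ∀ n s, HasDerivAt (c n) (c (n + 1) s) s)
    (hcM : ∀ n s, ‖c n s‖ ≤ M n) (hρ : ∀ n, 0 < ρ n) (hmono : Monotone ρ)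
    (hMρ : ∀ n, M (n + 1) ≤ ρ n * M n) {N r : ℕ} {s h : ℝ} (hs : IsBangSmall c M (N + r) s)
    (hh : |h| ≤ (Real.exp 1)⁻¹ * ∑ i ∈ range r, (ρ (N + i))⁻¹) :
    IsBangSmall c M N (s + h) := by
  have hradius (i : ℕ) : 0 ≤ (Real.exp 1)⁻¹ * (ρ i)⁻¹ :=
    mul_nonneg (by positivity) (inv_pos.2 (hρ i)).le
  induction r generalizing s h with
  | zero =>
    obtain rfl : h = 0 := by simpa using hh
    simpa using hs
  | succ r ih =>
    obtain ⟨h₁, hh₁, h₂, hh₂, rfl⟩ : ∃ h₁ ∈ Metric.closedBall (0 : ℝ) ((Real.exp 1)⁻¹ *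
        (ρ (N + r))⁻¹), ∃ h₂ ∈ Metric.closedBall (0 : ℝ) ((Real.exp 1)⁻¹ *
        ∑ i ∈ range r, (ρ (N + i))⁻¹), h₁ + h₂ = h := by
      rw [← Set.mem_add, closedBall_add_closedBall (hradius _)
        (by rw [mul_sum]; exact sum_nonneg fun i _ => hradius _)]
      simpa [sum_range_succ, mul_add, add_comm] using hh
    rw [mem_closedBall_zero_iff] at hh₁ hh₂
    rw [← add_assoc]
    exact ih (hs.add hc hcM hρ hmono hMρ hh₁) hh₂

/-- The Denjoy–Carleman theorem, by Bang's argument: being `IsBangSmall` of every order at `0`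
propagates to every `s`, since the total distance gained by lowering the order is infinite. -/
theorem eq_zero_of_forall_derivatives_eq_zero (hc : ∀ n s, HasDerivAt (c n) (c (n + 1) s) s)
    (hcM : ∀ n s, ‖c n s‖ ≤ M n) (hρ : ∀ n, 0 < ρ n) (hmono : Monotone ρ)
    (hMρ : ∀ n, M (n + 1) ≤ ρ n * M n) (hdiv : ¬ Summable fun n => (ρ n)⁻¹)
    (hzero : ∀ n, c n 0 = 0) (s : ℝ) : c 0 s = 0 := by
  have hsmall (N : ℕ) : ‖c 0 s‖ ≤ Real.exp (-(N : ℝ)) * M 0 := by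
    have hdivN : ¬ Summable fun i => (ρ (N + i))⁻¹ := by
      simpa only [add_comm N] using (summable_nat_add_iff N).not.2 hdiv
    obtain ⟨r, hr⟩ := (((not_summable_iff_tendsto_nat_atTop_of_nonneg
      fun i => (inv_pos.2 (hρ (N + i))).le).1 hdivN).eventually_ge_atTop (Real.exp 1 * |s|)).exists
    have hs : IsBangSmall c M N (0 + s) :=
      IsBangSmall.add_of_abs_le_sum (r := r) hc hcM hρ hmono hMρ
        (fun n _ => by
          rw [hzero, norm_zero]
          exact mul_nonneg (Real.exp_pos _).le ((norm_nonneg _).trans (hcM n 0)))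
        (by rwa [← div_eq_inv_mul, le_div_iff₀' (Real.exp_pos 1)])
    simpa using hs 0 N.zero_le
  have hlim : Filter.Tendsto (fun N : ℕ => Real.exp (-(N : ℝ)) * M 0) Filter.atTop (nhds 0) := by
    simpa using (Real.tendsto_exp_neg_atTop_nhds_zero.comp
      tendsto_natCast_atTop_atTop).mul_const (M 0)
  exact norm_le_zero_iff.1 (ge_of_tendsto' hlim hsmall)

end Quasianalytic

/-! ### Carleman's inequality -/

section Carleman

theorem le_exp_one_mul_factorial_rpow_inv {D : ℕ} (hD : 0 < D) :
    (D : ℝ) ≤ Real.exp 1 * (D.factorial : ℝ) ^ ((D : ℝ)⁻¹) := by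
  have hD' : (0 : ℝ) < D := by exact_mod_cast hD
  have hpow : (D : ℝ) ^ D ≤ Real.exp D * D.factorial :=
    (div_le_iff₀ (by positivity)).1 (Real.pow_div_factorial_le_exp (D : ℝ) hD'.le D)
  have hroot := Real.rpow_le_rpow (by positivity) hpow (inv_nonneg.2 hD'.le)
  rwa [Real.mul_rpow (Real.exp_pos _).le (by positivity), Real.pow_rpow_inv_natCast hD'.le hD.ne',
    ← Real.exp_mul, mul_inv_cancel₀ hD'.ne'] at hroot

/-- AM-GM applied to the terms `(i + 1) * a i`. -/
theorem prod_rpow_inv_le_sum {a : ℕ → ℝ} (ha : ∀ i, 0 ≤ a i) {D : ℕ} (hD : 0 < D) :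
    (∏ i ∈ range D, a i) ^ ((D : ℝ)⁻¹) ≤
      Real.exp 1 * (((D : ℝ) ^ 2)⁻¹ * ∑ i ∈ range D, ((i : ℝ) + 1) * a i) := by
  have hD' : (0 : ℝ) < D := by exact_mod_cast hD
  have hterm (i : ℕ) : 0 ≤ ((i : ℝ) + 1) * a i := mul_nonneg (by positivity) (ha i)
  have hP : 0 ≤ ∏ i ∈ range D, a i := prod_nonneg fun i _ => ha i
  have hprod : ∏ i ∈ range D, (((i : ℝ) + 1) * a i) = D.factorial * ∏ i ∈ range D, a i := by
    simp [prod_mul_distrib, ← prod_range_add_one_eq_factorial]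
  have hamgm : (D.factorial : ℝ) ^ ((D : ℝ)⁻¹) * (∏ i ∈ range D, a i) ^ ((D : ℝ)⁻¹) ≤
      (D : ℝ)⁻¹ * ∑ i ∈ range D, ((i : ℝ) + 1) * a i := by
    rw [← Real.mul_rpow (by positivity) hP, ← hprod, ← Real.finsetProd_rpow _ _ fun i _ => hterm i,
      mul_sum]
    exact Real.geom_mean_le_arith_mean_weighted _ _ _ (fun _ _ => by positivity)
      (by simp [hD'.ne']) fun i _ => hterm i
  refine le_of_mul_le_mul_left ?_ hD'
  calc (D : ℝ) * (∏ i ∈ range D, a i) ^ ((D : ℝ)⁻¹)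
      ≤ Real.exp 1 * (D.factorial : ℝ) ^ ((D : ℝ)⁻¹) * (∏ i ∈ range D, a i) ^ ((D : ℝ)⁻¹) :=
        mul_le_mul_of_nonneg_right (le_exp_one_mul_factorial_rpow_inv hD) (Real.rpow_nonneg hP _)
    _ ≤ Real.exp 1 * ((D : ℝ)⁻¹ * ∑ i ∈ range D, ((i : ℝ) + 1) * a i) := by
        rw [mul_assoc]
        exact mul_le_mul_of_nonneg_left hamgm (Real.exp_pos 1).le
    _ = D * (Real.exp 1 * (((D : ℝ) ^ 2)⁻¹ * ∑ i ∈ range D, ((i : ℝ) + 1) * a i)) := by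
        field_simp

theorem summable_prod_rpow_inv {a : ℕ → ℝ} (ha : ∀ i, 0 ≤ a i) (hs : Summable a) :
    Summable fun d : ℕ => (∏ i ∈ range (d + 1), a i) ^ (((d + 1 : ℕ) : ℝ)⁻¹) := by
  have htail (i N : ℕ) :
      ∑ d ∈ Ico i N, (((d + 1 : ℕ) : ℝ) ^ 2)⁻¹ * (((i : ℝ) + 1) * a i) ≤ 2 * a i := by
    have hsq : ∑ d ∈ Ico i N, (((d + 1 : ℕ) : ℝ) ^ 2)⁻¹ ≤ 2 / ((i : ℝ) + 1) := by
      rw [sum_Ico_add' (fun d : ℕ => ((d : ℝ) ^ 2)⁻¹) i N 1]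
      exact sum_Ioo_inv_sq_le i (N + 1)
    calc _ ≤ 2 / ((i : ℝ) + 1) * (((i : ℝ) + 1) * a i) := by
          rw [← sum_mul]
          exact mul_le_mul_of_nonneg_right hsq (mul_nonneg (by positivity) (ha i))
      _ = 2 * a i := by field_simp
  refine summable_of_sum_range_le (c := Real.exp 1 * (2 * ∑' i, a i))
    (fun d => Real.rpow_nonneg (prod_nonneg fun i _ => ha i) _) fun N => ?_
  calc ∑ d ∈ range N, (∏ i ∈ range (d + 1), a i) ^ (((d + 1 : ℕ) : ℝ)⁻¹)
      ≤ ∑ d ∈ range N, Real.exp 1 * ((((d + 1 : ℕ) : ℝ) ^ 2)⁻¹ *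
          ∑ i ∈ range (d + 1), ((i : ℝ) + 1) * a i) :=
        sum_le_sum fun d _ => prod_rpow_inv_le_sum ha d.succ_pos
    _ = Real.exp 1 * ∑ i ∈ range N, ∑ d ∈ Ico i N, (((d + 1 : ℕ) : ℝ) ^ 2)⁻¹ *
          (((i : ℝ) + 1) * a i) := by
        rw [← mul_sum]
        congr 1
        simp_rw [mul_sum]
        exact sum_comm' fun d i => by simp only [mem_range, mem_Ico]; omega
    _ ≤ Real.exp 1 * ∑ i ∈ range N, 2 * a i := by gcongr; exact htail _ _
    _ ≤ Real.exp 1 * (2 * ∑' i, a i) := by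
        rw [← mul_sum]
        gcongr
        exact hs.sum_le_tsum _ fun i _ => ha i

theorem summable_of_antitone_of_summable_odd {u : ℕ → ℝ} (hu : Antitone u) (hu0 : ∀ d, 0 ≤ u d)
    (hs : Summable fun d => u (2 * d + 1)) : Summable u := by
  rw [← summable_nat_add_iff 1]
  have heven : Summable fun d => u (2 * d + 1 + 1) :=
    hs.of_nonneg_of_le (fun d => hu0 _) fun d => hu (by omega)
  exact Summable.even_add_odd (f := fun d => u (d + 1)) hs heven

variable {e : ℕ → ℝ}

theorem monotone_sqrt_ratio (he : ∀ d, 0 < e d) (hlog : ∀ d, e (d + 1) ^ 2 ≤ e d * e (d + 2)) :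
    Monotone fun d => √(e (d + 1) / e d) := by
  refine monotone_nat_of_le_succ fun d => Real.sqrt_le_sqrt ?_
  rw [div_le_div_iff₀ (he _) (he _), ← sq, mul_comm]
  exact hlog d

theorem rpow_neg_inv_eq_mul_prod_rpow (he : ∀ d, 0 < e d) (d : ℕ) :
    e (d + 1) ^ (-(1 : ℝ) / (2 * (d + 1))) = (e 0)⁻¹ ^ ((1 : ℝ) / (2 * (d + 1))) *
      (∏ i ∈ range (d + 1), (√(e (i + 1) / e i))⁻¹) ^ (((d + 1 : ℕ) : ℝ)⁻¹) := by
  have hprod (D : ℕ) : (∏ i ∈ range D, √(e (i + 1) / e i)) ^ 2 = e D / e 0 := by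
    induction D with
    | zero => simp [(he 0).ne']
    | succ D ih =>
      rw [prod_range_succ, mul_pow, ih, Real.sq_sqrt (div_pos (he _) (he _)).le]
      field_simp [(he D).ne']
  have hP : 0 ≤ ∏ i ∈ range (d + 1), √(e (i + 1) / e i) := prod_nonneg fun i _ => by positivity
  have hsucc : e (d + 1) = e 0 * (∏ i ∈ range (d + 1), √(e (i + 1) / e i)) ^ 2 := by
    rw [hprod, mul_div_cancel₀ _ (he 0).ne']
  rw [prod_inv_distrib, hsucc, Real.mul_rpow (he 0).le (by positivity), Real.inv_rpow (he 0).le,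
    Real.inv_rpow hP, ← Real.rpow_neg (he 0).le, ← Real.rpow_neg hP, ← Real.rpow_natCast,
    ← Real.rpow_mul hP]
  congr 2
  · ring
  · push_cast; field_simp

theorem not_summable_inv_sqrt_ratio (he : ∀ d, 0 < e d)
    (hdiv : ¬ Summable fun d : ℕ => e (d + 1) ^ (-(1 : ℝ) / (2 * (d + 1)))) :
    ¬ Summable fun d => (√(e (d + 1) / e d))⁻¹ := by
  refine fun hs => hdiv ?_
  have hinv (i : ℕ) : 0 ≤ (√(e (i + 1) / e i))⁻¹ := by positivity
  refine ((summable_prod_rpow_inv hinv hs).mul_left (max 1 (e 0)⁻¹)).of_nonneg_of_le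
    (fun d => Real.rpow_nonneg (he _).le _) fun d => ?_
  rw [rpow_neg_inv_eq_mul_prod_rpow he]
  refine mul_le_mul_of_nonneg_right ?_ (Real.rpow_nonneg (prod_nonneg fun i _ => hinv i) _)
  have hexp : (1 : ℝ) / (2 * (d + 1)) ≤ 1 := by
    rw [div_le_one (by positivity)]
    linarith [d.cast_nonneg (α := ℝ)]
  rcases le_total (e 0)⁻¹ 1 with h | h
  · exact (Real.rpow_le_one (inv_pos.2 (he 0)).le h (by positivity)).trans (le_max_left _ _)
  · exact (Real.rpow_le_self_of_one_le h hexp).trans (le_max_right _ _)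

theorem not_summable_inv_sqrt_odd_ratio (he : ∀ d, 0 < e d)
    (hlog : ∀ d, e (d + 1) ^ 2 ≤ e d * e (d + 2))
    (hdiv : ¬ Summable fun d : ℕ => e (d + 1) ^ (-(1 : ℝ) / (2 * (d + 1)))) :
    ¬ Summable fun d => (√(e (2 * d + 2) / e (2 * d + 1)))⁻¹ := fun hs =>
  not_summable_inv_sqrt_ratio he hdiv <| summable_of_antitone_of_summable_odd
    (fun a b hab => inv_anti₀ (Real.sqrt_pos.2 (div_pos (he _) (he _)))
      (monotone_sqrt_ratio he hlog hab))
    (fun d => by positivity) hs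

theorem sqrt_sqrt_even_le (he : ∀ d, 0 < e d) (hlog : ∀ d, e (d + 1) ^ 2 ≤ e d * e (d + 2))
    (n : ℕ) :
    √√(e (2 * (n + 1))) ≤ √(e (2 * n + 2) / e (2 * n + 1)) * √√(e (2 * n)) := by
  have hn := he (2 * n)
  have hn1 := he (2 * n + 1)
  have hn2 := he (2 * n + 2)
  rw [mul_add_one, ← Real.sqrt_mul (by positivity)]
  refine Real.sqrt_le_sqrt ?_
  rw [Real.sqrt_le_left (by positivity), mul_pow, Real.sq_sqrt hn.le, div_pow,
    div_mul_eq_mul_div, le_div_iff₀ (by positivity)]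
  nlinarith [hlog (2 * n)]

end Carleman

/-! ### Polynomials in `L²` of a Carleman measure -/

section FourierTransform

variable {Ω : Type*} [MeasurableSpace Ω] {ν : Measure Ω}

theorem integrable_cexp_mul_I_mul {u : Ω → ℝ} (hu : AEMeasurable u ν) {f : Ω → ℂ}
    (hf : Integrable f ν) : Integrable (fun ω => Complex.exp (u ω * Complex.I) * f ω) ν :=
  hf.bdd_mul (c := 1) (by fun_prop)
    (Filter.Eventually.of_forall fun ω => (Complex.norm_exp_ofReal_mul_I (u ω)).le)

theorem hasDerivAt_integral_cexp_mul_I_mul {y : Ω → ℝ} (hy : AEMeasurable y ν) {f : Ω → ℂ}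
    (hf : Integrable f ν) (hyf : Integrable (fun ω => y ω * Complex.I * f ω) ν) (s : ℝ) :
    HasDerivAt (fun s : ℝ => ∫ ω, Complex.exp ((s * y ω : ℝ) * Complex.I) * f ω ∂ν)
      (∫ ω, Complex.exp ((s * y ω : ℝ) * Complex.I) * (y ω * Complex.I * f ω) ∂ν) s := by
  have hint : ∀ {f : Ω → ℂ}, Integrable f ν → ∀ s : ℝ,
      Integrable (fun ω => Complex.exp ((s * y ω : ℝ) * Complex.I) * f ω) ν := fun hf s =>
    integrable_cexp_mul_I_mul (hy.const_mul s) hf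
  refine (hasDerivAt_integral_of_dominated_loc_of_deriv_le Filter.univ_mem
    (Filter.Eventually.of_forall fun s => (hint hf s).aestronglyMeasurable) (hint hf s)
    (F' := fun s ω => Complex.exp ((s * y ω : ℝ) * Complex.I) * (y ω * Complex.I * f ω))
    (hint hyf s).aestronglyMeasurable (bound := fun ω => ‖y ω * Complex.I * f ω‖)
    (Filter.Eventually.of_forall fun ω s _ => ?_) hyf.norm
    (Filter.Eventually.of_forall fun ω s _ => ?_)).2
  · rw [norm_mul, Complex.norm_exp_ofReal_mul_I, one_mul]
  · have hlin : HasDerivAt (fun s : ℝ => ((s * y ω : ℝ) : ℂ) * Complex.I) (y ω * Complex.I) s := by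
      simpa using ((hasDerivAt_id s).mul_const (y ω)).ofReal_comp.mul_const Complex.I
    simpa only [mul_assoc] using hlin.cexp.mul_const (f ω)

theorem integral_cexp_mul_I_mul_eq_zero {y : Ω → ℝ} (hy : AEMeasurable y ν) {f : Ω → ℂ}
    (hf : ∀ n : ℕ, Integrable (fun ω => (y ω : ℂ) ^ n * f ω) ν)
    (hzero : ∀ n : ℕ, ∫ ω, (y ω : ℂ) ^ n * f ω ∂ν = 0) {e : ℕ → ℝ} (he : ∀ d, 0 < e d)
    (hlog : ∀ d, e (d + 1) ^ 2 ≤ e d * e (d + 2))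
    (hdiv : ¬ Summable fun d : ℕ => e (d + 1) ^ (-(1 : ℝ) / (2 * (d + 1))))
    {K : ℝ} (hK : 0 ≤ K) (hbound : ∀ n : ℕ, ∫ ω, |y ω| ^ n * ‖f ω‖ ∂ν ≤ K * √√(e (2 * n)))
    (s : ℝ) : ∫ ω, Complex.exp ((s * y ω : ℝ) * Complex.I) * f ω ∂ν = 0 := by
  have hmul : ∀ n : ℕ, (fun ω => (y ω * Complex.I) ^ n * f ω) =
      fun ω => Complex.I ^ n * ((y ω : ℂ) ^ n * f ω) := fun n => by
    funext ω
    rw [mul_pow]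
    ring
  have hint : ∀ n : ℕ, Integrable (fun ω => (y ω * Complex.I) ^ n * f ω) ν := fun n => by
    rw [hmul]
    exact (hf n).const_mul _
  have hvanish := eq_zero_of_forall_derivatives_eq_zero
    (c := fun n s => ∫ ω, Complex.exp ((s * y ω : ℝ) * Complex.I) *
      ((y ω * Complex.I) ^ n * f ω) ∂ν)
    (M := fun n => K * √√(e (2 * n))) (ρ := fun n => √(e (2 * n + 2) / e (2 * n + 1)))
    (fun n s => ?_) (fun n s => ?_) (fun n => Real.sqrt_pos.2 (div_pos (he _) (he _)))
    (fun a b hab => monotone_sqrt_ratio he hlog (by omega : 2 * a + 1 ≤ 2 * b + 1))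
    (fun n => ?_) (not_summable_inv_sqrt_odd_ratio he hlog hdiv) (fun n => ?_) s
  · simpa using hvanish
  · have h := hasDerivAt_integral_cexp_mul_I_mul hy (hint n)
      (by simpa only [pow_succ', mul_assoc] using hint (n + 1)) s
    simpa only [pow_succ', mul_assoc] using h
  · refine (norm_integral_le_integral_norm _).trans ((le_of_eq ?_).trans (hbound n))
    simp only [norm_mul, norm_pow, Complex.norm_exp_ofReal_mul_I, Complex.norm_I,
      Complex.norm_real, Real.norm_eq_abs, one_mul, mul_one]
  · calc K * √√(e (2 * (n + 1)))
        ≤ K * (√(e (2 * n + 2) / e (2 * n + 1)) * √√(e (2 * n))) :=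
          mul_le_mul_of_nonneg_left (sqrt_sqrt_even_le he hlog n) hK
      _ = _ := by ring
  · simp only [zero_mul, Complex.ofReal_zero, Complex.exp_zero, one_mul, hmul,
      integral_const_mul, hzero, mul_zero]

end FourierTransform

theorem ae_eq_zero_of_forall_integral_cexp_dual_mul_eq_zero {E : Type*} [NormedAddCommGroup E]
    [NormedSpace ℝ E] [MeasurableSpace E] [BorelSpace E] [SecondCountableTopology E]
    [CompleteSpace E] {ν : Measure E} {b : E → ℝ} (hb : Integrable b ν)
    (h : ∀ L : StrongDual ℝ E, ∫ x, Complex.exp (L x * Complex.I) * b x ∂ν = 0) : b =ᵐ[ν] 0 := by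
  have hchar : ∀ {f : E → ℝ}, Integrable f ν → (∀ x, 0 ≤ f x) → ∀ L : StrongDual ℝ E,
      charFunDual (ν.withDensity fun x => ENNReal.ofReal (f x)) L =
        ∫ x, Complex.exp (L x * Complex.I) * f x ∂ν := by
    intro f hf hf0 L
    rw [charFunDual_apply, integral_withDensity_eq_integral_toReal_smul₀
      hf.aemeasurable.ennreal_ofReal (Filter.Eventually.of_forall fun y => ENNReal.ofReal_lt_top)]
    simp only [ENNReal.toReal_ofReal (hf0 _), Complex.real_smul, mul_comm]
  have := isFiniteMeasure_withDensity_ofReal hb.pos_part.2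
  have := isFiniteMeasure_withDensity_ofReal hb.neg_part.2
  have hint : ∀ {f : E → ℝ}, Integrable f ν → ∀ L : StrongDual ℝ E,
      Integrable (fun x => Complex.exp (L x * Complex.I) * (f x : ℂ)) ν := fun hf L =>
    integrable_cexp_mul_I_mul L.continuous.aemeasurable hf.ofReal
  have hparts : ν.withDensity (fun x => ENNReal.ofReal (max (b x) 0)) =
      ν.withDensity fun x => ENNReal.ofReal (max (-b x) 0) := by
    refine Measure.ext_of_charFunDual (funext fun L => ?_)
    rw [hchar hb.pos_part (fun _ => le_max_right _ _), hchar hb.neg_part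
      (fun _ => le_max_right _ _), ← sub_eq_zero, ← integral_sub (hint hb.pos_part L)
      (hint hb.neg_part L), ← h L]
    simp only [← mul_sub, ← Complex.ofReal_sub, max_zero_sub_eq_self]
  have hae := (withDensity_eq_iff hb.pos_part.aemeasurable.ennreal_ofReal
    hb.neg_part.aemeasurable.ennreal_ofReal hb.pos_part.lintegral_lt_top.ne).1 hparts
  filter_upwards [hae] with x hx
  have hmax := (ENNReal.ofReal_eq_ofReal_iff (le_max_right _ _) (le_max_right _ _)).1 hx
  rw [Pi.zero_apply, ← max_zero_sub_eq_self (b x), hmax, sub_self]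

section SquareIntegrable

variable {Ω : Type*} [MeasurableSpace Ω] {ν : Measure Ω}

theorem integral_abs_mul_abs_le_sqrt_mul_sqrt {f g : Ω → ℝ} (hf : MemLp f 2 ν)
    (hg : MemLp g 2 ν) :
    ∫ ω, |f ω| * |g ω| ∂ν ≤ √(∫ ω, f ω ^ 2 ∂ν) * √(∫ ω, g ω ^ 2 ∂ν) := by
  have h := integral_mul_norm_le_Lp_mul_Lq Real.HolderConjugate.two_two
    (by simpa using hf) (by simpa using hg)
  simpa only [Real.norm_eq_abs, Real.rpow_two, sq_abs, ← Real.sqrt_eq_rpow] using h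

theorem continuous_integral_sq_mul {b : Ω → ℝ} (hb : MemLp b ⊤ ν) :
    Continuous fun u : Lp ℝ 2 ν => ∫ ω, u ω ^ 2 * b ω ∂ν := by
  let B := (ContinuousLinearMap.mul ℝ ℝ).holderL ν ⊤ 2 2 (hb.toLp b)
  have hB : (fun u : Lp ℝ 2 ν => ∫ ω, u ω ^ 2 * b ω ∂ν) = fun u => inner ℝ u (B u) := by
    funext u
    rw [L2.inner_def]
    refine integral_congr_ae ?_
    filter_upwards [(ContinuousLinearMap.mul ℝ ℝ).coeFn_holder (r := 2) (hb.toLp b) u,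
      hb.coeFn_toLp] with ω hω hbω
    change _ = B u ω * u ω
    rw [show B u ω = _ from hω, hbω, ContinuousLinearMap.mul_apply']
    ring
  rw [hB]
  fun_prop

theorem ae_nonneg_of_dense_of_forall_integral_sq_mul_nonneg [IsFiniteMeasure ν] {b : Ω → ℝ}
    (hb : MemLp b ⊤ ν) {D : Set (Lp ℝ 2 ν)} (hD : Dense D)
    (h : ∀ u ∈ D, 0 ≤ ∫ ω, u ω ^ 2 * b ω ∂ν) : 0 ≤ᵐ[ν] b := by
  have hall : ∀ u : Lp ℝ 2 ν, 0 ≤ ∫ ω, u ω ^ 2 * b ω ∂ν := fun u =>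
    closure_minimal h (isClosed_Ici.preimage (continuous_integral_sq_mul hb)) (hD u)
  refine ae_nonneg_of_forall_setIntegral_nonneg (hb.integrable le_top) fun s hs hνs => ?_
  have hsq : ∫ ω, indicatorConstLp 2 hs hνs.ne (1 : ℝ) ω ^ 2 * b ω ∂ν = ∫ ω in s, b ω ∂ν := by
    rw [← integral_indicator hs]
    refine integral_congr_ae ?_
    filter_upwards [indicatorConstLp_coeFn (p := 2) (hs := hs) (hμs := hνs.ne) (c := (1 : ℝ))]
      with ω hω
    by_cases hωs : ω ∈ s <;> simp [hω, hωs]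
  exact hsq ▸ hall _

end SquareIntegrable

section CarlemanMeasure

variable {m : ℕ} {ν : Measure (Fin m → ℝ)}

theorem momentsFinite.integrable_eval (hmom : momentsFinite ν) (r : MvPolynomial (Fin m) ℝ) :
    Integrable (fun y => eval y r) ν :=
  (hmom r).mono (continuous_eval r).aestronglyMeasurable
    (Filter.Eventually.of_forall fun y => by simp)

theorem momentsFinite.integrable_pow (hmom : momentsFinite ν) (j : Fin m) (d : ℕ) :
    Integrable (fun y : Fin m → ℝ => y j ^ d) ν := by
  simpa using hmom.integrable_eval (X j ^ d)

theorem momentsFinite.memLp_two_eval (hmom : momentsFinite ν) (r : MvPolynomial (Fin m) ℝ) :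
    MemLp (fun y => eval y r) 2 ν :=
  (memLp_two_iff_integrable_sq (continuous_eval r).aestronglyMeasurable).2 <| by
    simp only [← map_pow]
    exact hmom.integrable_eval (r ^ 2)

theorem momentsFinite.isFiniteMeasure (hmom : momentsFinite ν) : IsFiniteMeasure ν := by
  have h := hmom.integrable_eval 1
  simp only [map_one] at h
  exact (integrable_const_iff_isFiniteMeasure one_ne_zero).1 h

theorem momentsFinite.moment_log_convex (hmom : momentsFinite ν) (j : Fin m) (d : ℕ) :
    (∫ y, y j ^ (2 * (d + 1)) ∂ν) ^ 2 ≤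
      (∫ y, y j ^ (2 * d) ∂ν) * ∫ y, y j ^ (2 * (d + 2)) ∂ν := by
  have heven : ∀ n : ℕ, 0 ≤ ∫ y, y j ^ (2 * n) ∂ν := fun n =>
    integral_nonneg fun y => (even_two_mul n).pow_nonneg _
  have h := integral_abs_mul_abs_le_sqrt_mul_sqrt (hmom.memLp_two_eval (X j ^ d))
    (hmom.memLp_two_eval (X j ^ (d + 2)))
  have hprod : ∀ y : Fin m → ℝ, |y j ^ d| * |y j ^ (d + 2)| = y j ^ (2 * (d + 1)) := fun y => by
    rw [← abs_mul, ← pow_add, show d + (d + 2) = 2 * (d + 1) by ring,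
      abs_of_nonneg ((even_two_mul _).pow_nonneg _)]
  simp only [map_pow, eval_X, hprod, ← pow_mul, mul_comm _ 2] at h
  rw [← Real.sqrt_mul (heven d)] at h
  exact (Real.le_sqrt (heven _) (mul_nonneg (heven _) (heven _))).1 h

theorem Carleman.moment_pos (hcar : Carleman ν) (hmom : momentsFinite ν) (j : Fin m) (d : ℕ) :
    0 < ∫ y, y j ^ (2 * d) ∂ν := by
  have hnonneg : ∀ y : Fin m → ℝ, 0 ≤ y j ^ (2 * d) := fun y => (even_two_mul d).pow_nonneg _
  refine (integral_nonneg hnonneg).lt_of_ne fun h0 => hcar j ?_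
  have hae := (integral_eq_zero_iff_of_nonneg hnonneg (hmom.integrable_pow j (2 * d))).1 h0.symm
  have hmoment : ∀ n : ℕ, ∫ y, y j ^ (2 * (n + 1)) ∂ν = 0 := fun n =>
    integral_eq_zero_of_ae <| by
      filter_upwards [hae] with y hy
      simp [(eq_zero_of_pow_eq_zero hy : y j = 0)]
  have hterm : ∀ n : ℕ,
      (∫ y, y j ^ (2 * (n + 1)) ∂ν) ^ (-(1 : ℝ) / (2 * (n + 1))) = 0 := fun n => by
    rw [hmoment, Real.zero_rpow (div_neg_of_neg_of_pos (by norm_num) (by positivity)).ne]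
  simp_rw [hterm]
  exact summable_zero

theorem momentsFinite.integrable_eval_mul (hmom : momentsFinite ν) (r : MvPolynomial (Fin m) ℝ)
    {g : (Fin m → ℝ) → ℝ} (hg : MemLp g 2 ν) : Integrable (fun y => eval y r * g y) ν :=
  (hmom.memLp_two_eval r).integrable_mul hg

theorem momentsFinite.integral_abs_pow_mul_abs_le (hmom : momentsFinite ν)
    (r : MvPolynomial (Fin m) ℝ) {g : (Fin m → ℝ) → ℝ} (hg : MemLp g 2 ν) (j : Fin m) (n : ℕ) :
    ∫ y, |y j| ^ n * |eval y r * g y| ∂ν ≤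
      √(∫ y, g y ^ 2 ∂ν) * √√(∫ y, eval y r ^ 4 ∂ν) * √√(∫ y, y j ^ (2 * (2 * n)) ∂ν) := by
  have hfactor : ∫ y, |eval y (X j ^ n * r)| * |g y| ∂ν ≤
      √(∫ y, eval y (X j ^ n * r) ^ 2 ∂ν) * √(∫ y, g y ^ 2 ∂ν) :=
    integral_abs_mul_abs_le_sqrt_mul_sqrt (hmom.memLp_two_eval _) hg
  have hsq : ∫ y, eval y (X j ^ n * r) ^ 2 ∂ν ≤
      √(∫ y, y j ^ (2 * (2 * n)) ∂ν) * √(∫ y, eval y r ^ 4 ∂ν) := by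
    convert integral_abs_mul_abs_le_sqrt_mul_sqrt (hmom.memLp_two_eval (X j ^ (2 * n)))
      (hmom.memLp_two_eval (r ^ 2)) using 5 with y y y
    · simp only [map_mul, map_pow, eval_X, mul_pow, abs_pow, pow_mul, sq_abs]
      ring
    · simp only [map_pow, eval_X]
      ring
    · simp only [map_pow]
      ring
  calc ∫ y, |y j| ^ n * |eval y r * g y| ∂ν
      = ∫ y, |eval y (X j ^ n * r)| * |g y| ∂ν := by
        simp only [map_mul, map_pow, eval_X, abs_mul, abs_pow, mul_assoc]
    _ ≤ √(√(∫ y, y j ^ (2 * (2 * n)) ∂ν) * √(∫ y, eval y r ^ 4 ∂ν)) * √(∫ y, g y ^ 2 ∂ν) :=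
        hfactor.trans (by gcongr)
    _ = _ := by
        rw [Real.sqrt_mul (Real.sqrt_nonneg _)]
        ring

variable {I : Ideal (MvPolynomial (Fin m) ℝ)} {g : (Fin m → ℝ) → ℝ}

theorem Carleman.integral_cexp_sum_mul_eq_zero (hcar : Carleman ν) (hmom : momentsFinite ν)
    (hg : MemLp g 2 ν) (hI : ∀ r ∈ I, ∫ y, eval y r * g y ∂ν = 0) (ξ : Fin m → ℝ)
    (J : Finset (Fin m)) : ∀ r ∈ I,
      ∫ y, Complex.exp ((∑ j ∈ J, ξ j * y j : ℝ) * Complex.I) * ((eval y r * g y : ℝ) : ℂ) ∂ν =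
        0 := by
  -- A character in the variables of `J` keeps the moments in a further variable zero (by the
  -- induction hypothesis for `X j ^ n * r`) and does not change absolute values.
  induction J using Finset.induction_on with
  | empty =>
    intro r hr
    simpa [← Complex.ofReal_mul, integral_complex_ofReal] using hI r hr
  | insert j J hj ih =>
    intro r hr
    have hmul : ∀ n : ℕ, (fun y : Fin m → ℝ => (y j : ℂ) ^ n *
        (Complex.exp ((∑ i ∈ J, ξ i * y i : ℝ) * Complex.I) * ((eval y r * g y : ℝ) : ℂ))) =
        fun y => Complex.exp ((∑ i ∈ J, ξ i * y i : ℝ) * Complex.I) *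
          ((eval y (X j ^ n * r) * g y : ℝ) : ℂ) := fun n => by
      funext y
      simp only [map_mul, map_pow, eval_X]
      push_cast
      ring
    have hvanish := integral_cexp_mul_I_mul_eq_zero (measurable_pi_apply j).aemeasurable
      (fun n => by
        rw [hmul]
        exact integrable_cexp_mul_I_mul (Measurable.aemeasurable (by fun_prop))
          (hmom.integrable_eval_mul _ hg).ofReal)
      (fun n => by rw [hmul]; exact ih _ (I.mul_mem_left _ hr))
      (hcar.moment_pos hmom j) (hmom.moment_log_convex j) (hcar j)
      (mul_nonneg (Real.sqrt_nonneg _) (Real.sqrt_nonneg _))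
      (fun n => by
        simpa only [norm_mul, Complex.norm_exp_ofReal_mul_I, one_mul, Complex.norm_real,
          Real.norm_eq_abs, abs_mul] using hmom.integral_abs_pow_mul_abs_le r hg j n) (ξ j)
    rw [← hvanish]
    simp only [sum_insert hj, Complex.ofReal_add, add_mul, Complex.exp_add, mul_assoc]

theorem Carleman.eval_mul_ae_eq_zero (hcar : Carleman ν) (hmom : momentsFinite ν)
    (hg : MemLp g 2 ν) (hI : ∀ r ∈ I, ∫ y, eval y r * g y ∂ν = 0) {r : MvPolynomial (Fin m) ℝ}
    (hr : r ∈ I) : (fun y => eval y r * g y) =ᵐ[ν] 0 := by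
  refine ae_eq_zero_of_forall_integral_cexp_dual_mul_eq_zero (hmom.integrable_eval_mul r hg)
    fun L => ?_
  obtain ⟨ξ, hξ⟩ : ∃ ξ : Fin m → ℝ, ∀ y, L y = ∑ j, ξ j * y j :=
    ⟨fun j => L (Pi.single j 1), fun y => (congrArg L (pi_eq_sum_univ' y)).trans
      (by simp only [map_sum, map_smul, smul_eq_mul, mul_comm])⟩
  simp_rw [hξ]
  exact hcar.integral_cexp_sum_mul_eq_zero hmom hg hI _ univ r hr

/-- Multiplication by `w` as a map from polynomials to `L²(ν)`. -/
noncomputable def momentsFinite.mulToLp (hmom : momentsFinite ν) (w : MvPolynomial (Fin m) ℝ) :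
    MvPolynomial (Fin m) ℝ →ₗ[ℝ] Lp ℝ 2 ν where
  toFun t := (hmom.memLp_two_eval (t * w)).toLp _
  map_add' s t := by
    rw [← MemLp.toLp_add]
    exact MemLp.toLp_congr _ _ (Filter.Eventually.of_forall fun y => by simp [add_mul])
  map_smul' c t := by
    rw [RingHom.id_apply, ← MemLp.toLp_const_smul]
    exact MemLp.toLp_congr _ _ (Filter.Eventually.of_forall fun y => by simp)

theorem momentsFinite.coeFn_mulToLp (hmom : momentsFinite ν) (w t : MvPolynomial (Fin m) ℝ) :
    hmom.mulToLp w t =ᵐ[ν] fun y => eval y (t * w) :=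
  (hmom.memLp_two_eval (t * w)).coeFn_toLp

theorem Carleman.dense_range_mulToLp (hcar : Carleman ν) (hmom : momentsFinite ν)
    {w : MvPolynomial (Fin m) ℝ} (hw : ∀ y, eval y w ≠ 0) :
    Dense (LinearMap.range (hmom.mulToLp w) : Set (Lp ℝ 2 ν)) := by
  rw [Submodule.dense_iff_topologicalClosure_eq_top, Submodule.topologicalClosure_eq_top_iff,
    Submodule.eq_bot_iff]
  intro g hg
  have horth : ∀ r ∈ Ideal.span {w}, ∫ y, eval y r * g y ∂ν = 0 := by
    intro r hr
    obtain ⟨t, rfl⟩ := Ideal.mem_span_singleton'.1 hr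
    rw [← (Submodule.mem_orthogonal _ g).1 hg _ ⟨t, rfl⟩, L2.inner_def]
    refine integral_congr_ae ?_
    filter_upwards [hmom.coeFn_mulToLp w t] with y hy
    rw [hy, RCLike.inner_apply, conj_trivial, mul_comm]
  rw [Lp.eq_zero_iff_ae_eq_zero]
  filter_upwards [hcar.eval_mul_ae_eq_zero hmom (Lp.memLp g) horth
    (Ideal.mem_span_singleton_self w)] with y hy
  exact (mul_eq_zero.1 hy).resolve_left (hw y)

theorem nonneg_of_ae_nonneg_of_hasSupport {Y : Set (Fin m → ℝ)} (hsupp : hasSupport ν Y)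
    {f : (Fin m → ℝ) → ℝ} (hf : Continuous f) (hnonneg : 0 ≤ᵐ[ν] f) : ∀ y ∈ Y, 0 ≤ f y := by
  intro y hy
  by_contra! hneg
  refine (hsupp.2 {y | f y < 0} (isOpen_lt hf continuous_const) ⟨y, hneg, hy⟩).ne' ?_
  simpa only [Filter.EventuallyLE, ae_iff, Pi.zero_apply, not_le] using hnonneg

theorem Carleman.eval_nonneg_of_forall_integral_sq_mul_nonneg (hcar : Carleman ν)
    (hmom : momentsFinite ν) {Y : Set (Fin m → ℝ)} (hsupp : hasSupport ν Y)
    {a : MvPolynomial (Fin m) ℝ}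
    (ha : ∀ t : MvPolynomial (Fin m) ℝ, 0 ≤ ∫ y, eval y t ^ 2 * eval y a ∂ν) :
    ∀ y ∈ Y, 0 ≤ eval y a := by
  -- With `t = u / (1 + a²)` the form `∫ t² a` becomes `∫ u² b` for a bounded `b`, which is
  -- continuous in `u ∈ L²`.
  have hw : ∀ y, 0 < eval y (1 + a ^ 2) := fun y => by
    simp only [map_add, map_one, map_pow]
    positivity
  set b : (Fin m → ℝ) → ℝ := fun y => eval y a / eval y (1 + a ^ 2) ^ 2
  have hbcont : Continuous b := (continuous_eval a).div₀ ((continuous_eval _).pow 2)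
    fun y => (pow_pos (hw y) 2).ne'
  have hb : MemLp b ⊤ ν := memLp_top_of_bound hbcont.aestronglyMeasurable 1 <|
    Filter.Eventually.of_forall fun y => by
      rw [Real.norm_eq_abs, abs_div, abs_of_pos (pow_pos (hw y) 2), div_le_one (pow_pos (hw y) 2)]
      simp only [map_add, map_one, map_pow]
      nlinarith [sq_abs (eval y a), sq_nonneg (|eval y a| - 1), sq_nonneg (eval y a ^ 2)]
  have hnonneg : ∀ u ∈ (LinearMap.range (hmom.mulToLp (1 + a ^ 2)) : Set (Lp ℝ 2 ν)),
      0 ≤ ∫ y, u y ^ 2 * b y ∂ν := by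
    rintro _ ⟨t, rfl⟩
    refine (ha t).trans_eq (integral_congr_ae ?_)
    filter_upwards [hmom.coeFn_mulToLp (1 + a ^ 2) t] with y hy
    rw [hy, map_mul, mul_pow, mul_assoc, mul_div_cancel₀ _ (pow_pos (hw y) 2).ne']
  have := hmom.isFiniteMeasure
  have hbY := nonneg_of_ae_nonneg_of_hasSupport hsupp hbcont <|
    ae_nonneg_of_dense_of_forall_integral_sq_mul_nonneg hb
      (hcar.dense_range_mulToLp hmom fun y => (hw y).ne') hnonneg
  exact fun y hy => not_lt.1 fun hneg =>
    (div_neg_of_neg_of_pos hneg (pow_pos (hw y) 2)).not_ge (hbY y hy)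

end CarlemanMeasure

/-! ### Degree-bounded certificates -/

section IntegrateOut

variable {n m : ℕ} {ν : Measure (Fin m → ℝ)}

theorem eval_bind₁_sumElim {σ τ R : Type*} [CommSemiring R] (x : σ → R) (y : τ → R)
    (r : MvPolynomial (σ ⊕ τ) R) :
    eval y (bind₁ (Sum.elim (fun i => C (x i)) X) r) = eval (Sum.elim x y) r := by
  simp only [eval, eval₂Hom_bind₁]
  congr 2
  funext i
  rcases i with i | j <;> simp

namespace momentsFinite

theorem integrable_eval_sumElim (hmom : momentsFinite ν) (x : Fin n → ℝ)
    (r : MvPolynomial (Fin n ⊕ Fin m) ℝ) : Integrable (fun y => eval (Sum.elim x y) r) ν := by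
  simp_rw [← eval_bind₁_sumElim]
  exact hmom.integrable_eval _

theorem eval_integY (hmom : momentsFinite ν) (x : Fin n → ℝ)
    (r : MvPolynomial (Fin n ⊕ Fin m) ℝ) :
    eval x (integY ν r) = ∫ y, eval (Sum.elim x y) r ∂ν := by
  have hterm : ∀ (d : (Fin n ⊕ Fin m) →₀ ℕ) (y : Fin m → ℝ),
      eval (Sum.elim x y) (monomial d (r.coeff d)) =
        (r.coeff d * ∏ i, x i ^ d (Sum.inl i)) * ∏ j, y j ^ d (Sum.inr j) := fun d y => by
    rw [eval_monomial, Finsupp.prod_fintype _ _ (fun i => pow_zero _), Fintype.prod_sum_type]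
    simp [mul_assoc]
  have hr : ∀ y, eval (Sum.elim x y) r =
      ∑ d ∈ r.support, eval (Sum.elim x y) (monomial d (r.coeff d)) := fun y => by
    rw [← map_sum, support_sum_monomial_coeff]
  simp_rw [hr]
  rw [integral_finsetSum _ fun d _ => hmom.integrable_eval_sumElim x _, integY, map_sum]
  refine Finset.sum_congr rfl fun d _ => ?_
  simp_rw [hterm]
  rw [integral_const_mul, eval_monomial, Finsupp.prod_fintype _ _ (fun i => pow_zero _)]
  simp only [xPart, Finsupp.comapDomain_apply]
  ring

theorem integY_add (hmom : momentsFinite ν) (r s : MvPolynomial (Fin n ⊕ Fin m) ℝ) :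
    integY ν (r + s) = integY ν r + integY ν s := by
  refine MvPolynomial.funext fun x => ?_
  simp only [map_add, hmom.eval_integY]
  exact integral_add (hmom.integrable_eval_sumElim x r) (hmom.integrable_eval_sumElim x s)

theorem integY_rename_mul (hmom : momentsFinite ν) (t : MvPolynomial (Fin n) ℝ)
    (r : MvPolynomial (Fin n ⊕ Fin m) ℝ) :
    integY ν (rename Sum.inl t * r) = t * integY ν r := by
  refine MvPolynomial.funext fun x => ?_
  simp only [map_mul, hmom.eval_integY, eval_rename, Sum.elim_comp_inl]
  exact integral_const_mul _ _

end momentsFinite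

end IntegrateOut

section SOSMatrix

variable {σ ι : Type*} [Fintype ι] {M N : Matrix ι ι (MvPolynomial σ ℝ)}

namespace IsSOSMatrix

theorem zero : IsSOSMatrix (0 : Matrix ι ι (MvPolynomial σ ℝ)) :=
  ⟨0, 0, by simp⟩

theorem add (hM : IsSOSMatrix M) (hN : IsSOSMatrix N) : IsSOSMatrix (M + N) := by
  obtain ⟨l, T, rfl⟩ := hM
  obtain ⟨l', T', rfl⟩ := hN
  refine ⟨l + l', Matrix.of fun r => Fin.addCases (fun i => T i) (fun i => T' i) r, ?_⟩
  ext1 i j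
  simp [Matrix.mul_apply, Fin.sum_univ_add]

theorem mul_self_smul (hM : IsSOSMatrix M) (t : MvPolynomial σ ℝ) :
    IsSOSMatrix ((t * t) • M) := by
  obtain ⟨l, T, rfl⟩ := hM
  exact ⟨l, t • T, by simp [smul_smul]⟩

theorem smul (hM : IsSOSMatrix M) {a : ℝ} (ha : 0 ≤ a) : IsSOSMatrix (a • M) := by
  have h := hM.mul_self_smul (C (√a))
  rwa [← C_mul, Real.mul_self_sqrt ha, ← algebraMap_eq, algebraMap_smul] at h

theorem vecMulVec_self (v : ι → MvPolynomial σ ℝ) : IsSOSMatrix (vecMulVec v v) :=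
  ⟨1, Matrix.of fun _ => v, by ext1 i j; simp [Matrix.mul_apply, vecMulVec_apply]⟩

theorem isSymm (hM : IsSOSMatrix M) : M.IsSymm := by
  obtain ⟨l, T, rfl⟩ := hM
  simp [Matrix.IsSymm, Matrix.transpose_mul]

end IsSOSMatrix

end SOSMatrix

section BlockTrace

variable {R ι κ : Type*} [CommSemiring R] [Fintype κ]

theorem lram_add (A A' : Matrix (ι × κ) (ι × κ) R) (B : Matrix κ κ R) :
    lram (A + A') B = lram A B + lram A' B := by
  ext1 i j
  simp [lram, add_mul, Finset.sum_add_distrib]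

theorem lram_smul (r : R) (A : Matrix (ι × κ) (ι × κ) R) (B : Matrix κ κ R) :
    lram (r • A) B = r • lram A B := by
  ext1 i j
  simp [lram, mul_assoc, Finset.mul_sum]

theorem lram_zero (B : Matrix κ κ R) : lram (0 : Matrix (ι × κ) (ι × κ) R) B = 0 := by
  ext1 i j
  simp [lram]

theorem lram_isSymm {A : Matrix (ι × κ) (ι × κ) R} {B : Matrix κ κ R} (hA : A.IsSymm)
    (hB : B.IsSymm) : (lram A B).IsSymm := by
  ext1 i j
  simp only [lram, transpose_apply, of_apply]
  rw [Finset.sum_comm]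
  refine Finset.sum_congr rfl fun a _ => Finset.sum_congr rfl fun c _ => ?_
  rw [hA.apply, hB.apply]

end BlockTrace

section IntegratedBlockTrace

variable {n m : ℕ} {ι κ : Type*} [Fintype κ] {ν : Measure (Fin m → ℝ)}

/-- The polynomial matrix `∫_Y ⟨S(x, y), G(x, y)⟩_p dν(y)`, through which the weight matrix `S`
enters a certificate. -/
noncomputable def integLram (ν : Measure (Fin m → ℝ))
    (S : Matrix (ι × κ) (ι × κ) (MvPolynomial (Fin n ⊕ Fin m) ℝ))
    (G : Matrix κ κ (MvPolynomial (Fin n ⊕ Fin m) ℝ)) : Matrix ι ι (MvPolynomial (Fin n) ℝ) :=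
  (lram S G).map (integY ν)

variable (G : Matrix κ κ (MvPolynomial (Fin n ⊕ Fin m) ℝ))

theorem integLram_zero :
    integLram ν (0 : Matrix (ι × κ) (ι × κ) (MvPolynomial (Fin n ⊕ Fin m) ℝ)) G = 0 := by
  ext1 i j
  simp [integLram, lram_zero, integY]

theorem integLram_isSymm {G : Matrix κ κ (MvPolynomial (Fin n ⊕ Fin m) ℝ)}
    {S : Matrix (ι × κ) (ι × κ) (MvPolynomial (Fin n ⊕ Fin m) ℝ)} (hS : S.IsSymm)
    (hG : G.IsSymm) : (integLram ν S G).IsSymm :=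
  (lram_isSymm hS hG).map _

theorem momentsFinite.integLram_add (hmom : momentsFinite ν)
    (S S' : Matrix (ι × κ) (ι × κ) (MvPolynomial (Fin n ⊕ Fin m) ℝ)) :
    integLram ν (S + S') G = integLram ν S G + integLram ν S' G := by
  ext1 i j
  simp only [integLram, lram_add, Matrix.add_apply, Matrix.map_apply, hmom.integY_add]

theorem momentsFinite.integLram_rename_smul (hmom : momentsFinite ν)
    (t : MvPolynomial (Fin n) ℝ)
    (S : Matrix (ι × κ) (ι × κ) (MvPolynomial (Fin n ⊕ Fin m) ℝ)) :
    integLram ν ((rename Sum.inl t : MvPolynomial (Fin n ⊕ Fin m) ℝ) • S) G =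
      t • integLram ν S G := by
  ext1 i j
  simp only [integLram, lram_smul, Matrix.smul_apply, Matrix.map_apply, smul_eq_mul,
    hmom.integY_rename_mul]

theorem momentsFinite.integLram_smul (hmom : momentsFinite ν) (a : ℝ)
    (S : Matrix (ι × κ) (ι × κ) (MvPolynomial (Fin n ⊕ Fin m) ℝ)) :
    integLram ν (a • S) G = a • integLram ν S G := by
  have h := hmom.integLram_rename_smul G (C a) S
  rwa [rename_C, ← algebraMap_eq, ← algebraMap_eq, algebraMap_smul, algebraMap_smul] at h

end IntegratedBlockTrace

section Degrees

variable {n m : ℕ} {ι σ : Type*} [Fintype ι]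

theorem matDeg_le_iff {M : Matrix ι ι (MvPolynomial σ ℝ)} {d : ℕ} :
    matDeg M ≤ d ↔ ∀ i j, (M i j).totalDegree ≤ d := by
  simp [matDeg, Finset.sup_le_iff]

theorem matDegX_le_iff {M : Matrix ι ι (MvPolynomial (Fin n ⊕ Fin m) ℝ)} {d : ℕ} :
    matDegX M ≤ d ↔ ∀ i j, ∀ e ∈ (M i j).support, ∑ i : Fin n, e (Sum.inl i) ≤ d := by
  simp only [matDegX, degX, Finset.sup_le_iff, Finset.mem_univ, true_imp_iff]

theorem matDegY_le_iff {M : Matrix ι ι (MvPolynomial (Fin n ⊕ Fin m) ℝ)} {d : ℕ} :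
    matDegY M ≤ d ↔ ∀ i j, ∀ e ∈ (M i j).support, ∑ j : Fin m, e (Sum.inr j) ≤ d := by
  simp only [matDegY, degY, Finset.sup_le_iff, Finset.mem_univ, true_imp_iff]

end Degrees

section Certificates

variable {n m : ℕ} {ι κ : Type*} [Fintype ι] [Fintype κ] {ν : Measure (Fin m → ℝ)}
  {G : Matrix κ κ (MvPolynomial (Fin n ⊕ Fin m) ℝ)} {d k : ℕ}
  {H H' : Matrix ι ι (MvPolynomial (Fin n) ℝ)}

/-- `H = Σ₀ + ∫_Y ⟨Σ, G⟩_p dν` for SOS matrices `Σ₀`, `Σ` within the degree bounds of level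
`(d, k)` of the hierarchy; `(matDegX G + 1) / 2` is `⌈deg_x G / 2⌉`. -/
def HasCert (ν : Measure (Fin m → ℝ)) (G : Matrix κ κ (MvPolynomial (Fin n ⊕ Fin m) ℝ))
    (d k : ℕ) (H : Matrix ι ι (MvPolynomial (Fin n) ℝ)) : Prop :=
  ∃ (S0 : Matrix ι ι (MvPolynomial (Fin n) ℝ))
    (Sg : Matrix (ι × κ) (ι × κ) (MvPolynomial (Fin n ⊕ Fin m) ℝ)),
    IsSOSMatrix S0 ∧ matDeg S0 ≤ 2 * d ∧ IsSOSMatrix Sg ∧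
    matDegX Sg ≤ 2 * d - 2 * ((matDegX G + 1) / 2) ∧ matDegY Sg ≤ 2 * k ∧
    H = S0 + integLram ν Sg G

theorem IsSOSMatrix.hasCert (hH : IsSOSMatrix H) (hd : matDeg H ≤ 2 * d) : HasCert ν G d k H :=
  ⟨H, 0, hH, hd, .zero, by simp [matDegX_le_iff], by simp [matDegY_le_iff],
    by rw [integLram_zero, add_zero]⟩

theorem HasCert.add (hmom : momentsFinite ν) (hH : HasCert ν G d k H)
    (hH' : HasCert ν G d k H') : HasCert ν G d k (H + H') := by
  classical
  obtain ⟨S, P, hS, hSd, hP, hPx, hPy, rfl⟩ := hH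
  obtain ⟨S', P', hS', hSd', hP', hPx', hPy', rfl⟩ := hH'
  refine ⟨S + S', P + P', hS.add hS', ?_, hP.add hP', ?_, ?_, ?_⟩
  · exact matDeg_le_iff.2 fun i j => (totalDegree_add _ _).trans
      (max_le (matDeg_le_iff.1 hSd i j) (matDeg_le_iff.1 hSd' i j))
  · refine matDegX_le_iff.2 fun i j e he => ?_
    exact (Finset.mem_union.1 (support_add he)).elim (matDegX_le_iff.1 hPx i j e)
      (matDegX_le_iff.1 hPx' i j e)
  · refine matDegY_le_iff.2 fun i j e he => ?_
    exact (Finset.mem_union.1 (support_add he)).elim (matDegY_le_iff.1 hPy i j e)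
      (matDegY_le_iff.1 hPy' i j e)
  · rw [hmom.integLram_add, add_add_add_comm]

theorem HasCert.smul (hmom : momentsFinite ν) (hH : HasCert ν G d k H) {a : ℝ} (ha : 0 ≤ a) :
    HasCert ν G d k (a • H) := by
  obtain ⟨S, P, hS, hSd, hP, hPx, hPy, rfl⟩ := hH
  refine ⟨a • S, a • P, hS.smul ha, ?_, hP.smul ha, ?_, ?_, ?_⟩
  · exact matDeg_le_iff.2 fun i j => (totalDegree_smul_le _ _).trans (matDeg_le_iff.1 hSd i j)
  · exact matDegX_le_iff.2 fun i j e he => matDegX_le_iff.1 hPx i j e (support_smul he)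
  · exact matDegY_le_iff.2 fun i j e he => matDegY_le_iff.1 hPy i j e (support_smul he)
  · rw [hmom.integLram_smul, smul_add]

/-- The cone of matrices with a certificate of level `(d, k)`. -/
def certCone (ι : Type*) [Fintype ι] (hmom : momentsFinite ν)
    (G : Matrix κ κ (MvPolynomial (Fin n ⊕ Fin m) ℝ)) (d k : ℕ) :
    PointedCone ℝ (Matrix ι ι (MvPolynomial (Fin n) ℝ)) where
  carrier := {H | HasCert ν G d k H}
  zero_mem' := IsSOSMatrix.zero.hasCert (by simp [matDeg_le_iff])
  add_mem' hH hH' := hH.add hmom hH'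
  smul_mem' a _ hH := hH.smul hmom a.2

theorem vecMulVec_mem_certCone (hmom : momentsFinite ν) (v : ι → MvPolynomial (Fin n) ℝ)
    (hv : ∀ a, (v a).totalDegree ≤ d) : vecMulVec v v ∈ certCone ι hmom G d k :=
  (IsSOSMatrix.vecMulVec_self v).hasCert <| matDeg_le_iff.2 fun i j =>
    (totalDegree_mul _ _).trans <| by linarith [hv i, hv j]

end Certificates

/-! ### Cones and positive functionals -/

section Cone

variable {E : Type*} [AddCommGroup E] [Module ℝ E] {K : PointedCone ℝ E} {u : E}

theorem sub_sub_sub_mem_of_concave (b : ℕ → E) {c : ℕ}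
    (hconc : ∀ s, s + 1 < c → (2 : ℝ) • b (s + 1) - b s - b (s + 2) ∈ K) {s t : ℕ} (hst : s ≤ t)
    (htc : t < c) : (b (s + 1) - b s) - (b (t + 1) - b t) ∈ K := by
  induction t, hst using Nat.le_induction with
  | base => simp
  | succ t _ ih =>
    convert K.add_mem (ih (by lia)) (hconc t htc) using 1
    module

theorem mem_of_concave_of_endpoints_mem (b : ℕ → E) {c : ℕ}
    (hconc : ∀ s, s + 1 < c → (2 : ℝ) • b (s + 1) - b s - b (s + 2) ∈ K)
    (h0 : b 0 ∈ K) (hc : b c ∈ K) {s : ℕ} (hs : s ≤ c) : b s ∈ K := by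
  rcases Nat.eq_zero_or_pos c with rfl | hcpos
  · rwa [Nat.le_zero.1 hs]
  let D : ℕ → E := fun u => b (u + 1) - b u
  have hmem : ∑ u ∈ range s, ∑ t ∈ Ico s c, (D u - D t) ∈ K :=
    K.sum_mem fun u hu => K.sum_mem fun t ht => by
      rw [Finset.mem_range] at hu
      rw [Finset.mem_Ico] at ht
      exact sub_sub_sub_mem_of_concave b hconc (by lia) ht.2
  have hsum : ∑ u ∈ range s, ∑ t ∈ Ico s c, (D u - D t) =
      ((c : ℝ) - s) • (b s - b 0) - (s : ℝ) • (b c - b s) := by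
    simp only [Finset.sum_sub_distrib, Finset.sum_const, Finset.card_range, Nat.card_Ico,
      ← Finset.smul_sum]
    rw [Finset.sum_range_sub, Finset.sum_Ico_sub _ hs, ← Nat.cast_smul_eq_nsmul ℝ,
      ← Nat.cast_smul_eq_nsmul ℝ, Nat.cast_sub hs]
  have hcs : (0 : ℝ) ≤ c - s := sub_nonneg.2 (mod_cast hs)
  have hcR : (0 : ℝ) < c := mod_cast hcpos
  have hcb : (c : ℝ) • b s ∈ K := by
    convert K.add_mem (K.add_mem (hsum ▸ hmem) (K.smul_mem hcs h0))
      (K.smul_mem s.cast_nonneg hc) using 1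
    module
  simpa only [smul_smul, inv_mul_cancel₀ hcR.ne', one_smul] using
    K.smul_mem (inv_nonneg.2 hcR.le) hcb

/-- The order ideal of `u`: the vectors bounded above and below by multiples of `u` in the order
whose nonnegative elements are `K`. -/
def orderIdeal (K : PointedCone ℝ E) (u : E) : Submodule ℝ E where
  carrier := {v | (∃ r : ℝ, r • u + v ∈ K) ∧ ∃ r : ℝ, r • u - v ∈ K}
  zero_mem' := ⟨⟨0, by simp⟩, ⟨0, by simp⟩⟩
  add_mem' := by
    rintro v w ⟨⟨r, hr⟩, ⟨s, hs⟩⟩ ⟨⟨r', hr'⟩, ⟨s', hs'⟩⟩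
    refine ⟨⟨r + r', ?_⟩, ⟨s + s', ?_⟩⟩
    · convert K.add_mem hr hr' using 1
      module
    · convert K.add_mem hs hs' using 1
      module
  smul_mem' := by
    rintro a v ⟨⟨r, hr⟩, ⟨s, hs⟩⟩
    rcases le_total 0 a with ha | ha
    · refine ⟨⟨a * r, ?_⟩, ⟨a * s, ?_⟩⟩
      · convert K.smul_mem ha hr using 1
        module
      · convert K.smul_mem ha hs using 1
        module
    · refine ⟨⟨-a * s, ?_⟩, ⟨-a * r, ?_⟩⟩
      · convert K.smul_mem (neg_nonneg.2 ha) hs using 1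
        module
      · convert K.smul_mem (neg_nonneg.2 ha) hr using 1
        module

theorem orderIdeal_mono {K' : PointedCone ℝ E} (h : K ≤ K') : orderIdeal K u ≤ orderIdeal K' u :=
  fun _ hv => ⟨hv.1.imp fun _ hr => h hr, hv.2.imp fun _ hr => h hr⟩

theorem self_mem_orderIdeal (hu : u ∈ K) : u ∈ orderIdeal K u :=
  ⟨⟨0, by simpa using hu⟩, ⟨1, by simp⟩⟩

theorem smul_mem_pointedCone_iff_of_neg {a : ℝ} (ha : a < 0) : a • u ∈ K ↔ -u ∈ K := by
  refine ⟨fun h => ?_, fun h => ?_⟩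
  · simpa [smul_smul, ha.ne] using K.smul_mem (inv_nonneg.2 (neg_nonneg.2 ha.le)) h
  · simpa using K.smul_mem (neg_nonneg.2 ha.le) h

theorem exists_nonneg_on_orderIdeal_of_neg_notMem (hu : u ∈ K) (hneg : -u ∉ K) :
    ∃ g : E →ₗ[ℝ] ℝ, (∀ v ∈ K, v ∈ orderIdeal K u → 0 ≤ g v) ∧ g u = 1 := by
  let u' : orderIdeal K u := ⟨u, self_mem_orderIdeal hu⟩
  have hu' : u' ≠ 0 := fun h0 => hneg <| by simp [show u = 0 from congrArg Subtype.val h0]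
  let f : orderIdeal K u →ₗ.[ℝ] ℝ := LinearPMap.mkSpanSingleton u' 1 hu'
  have hfu : f ⟨u', Submodule.mem_span_singleton_self _⟩ = 1 :=
    LinearPMap.mkSpanSingleton_apply ℝ ℝ hu' 1
  have hnonneg : ∀ x : f.domain, (x : orderIdeal K u) ∈ K.comap (orderIdeal K u).subtype →
      0 ≤ f x := by
    rintro ⟨x, hx⟩ hxK
    obtain ⟨r, rfl⟩ := Submodule.mem_span_singleton.1 hx
    have hfr : f ⟨r • u', hx⟩ = r := (LinearPMap.map_smul f r _).trans <| by
      rw [hfu, smul_eq_mul, mul_one]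
    rw [hfr]
    by_contra! hr
    exact hneg ((smul_mem_pointedCone_iff_of_neg hr).1 hxK)
  have hcofinal : ∀ y : orderIdeal K u, ∃ x : f.domain,
      (x : orderIdeal K u) + y ∈ K.comap (orderIdeal K u).subtype := fun y => by
    obtain ⟨r, hr⟩ := y.2.1
    exact ⟨⟨r • u', Submodule.smul_mem _ _ (Submodule.mem_span_singleton_self _)⟩, hr⟩
  obtain ⟨g₀, hg₀f, hg₀⟩ := riesz_extension _ f hnonneg hcofinal
  obtain ⟨g, hg⟩ := LinearMap.exists_extend g₀
  have hgg₀ : ∀ v : orderIdeal K u, g v = g₀ v := fun v => LinearMap.congr_fun hg v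
  exact ⟨g, fun v hv hvU => (hg₀ ⟨v, hvU⟩ hv).trans_eq (hgg₀ ⟨v, hvU⟩).symm,
    (hgg₀ u').trans ((hg₀f _).trans hfu)⟩

theorem neg_notMem_of_mem_orderIdeal_of_notMem {h : E} (hu : u ∈ K) (hh : h ∈ orderIdeal K u)
    (hhK : h ∉ K) : -u ∉ K := fun hneg => by
  obtain ⟨r, hr⟩ := hh.1
  have hru : -(r • u) ∈ K := by
    rcases le_total 0 r with h0 | h0
    · simpa only [smul_neg] using K.smul_mem h0 hneg
    · simpa only [neg_smul] using K.smul_mem (neg_nonneg.2 h0) hu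
  exact hhK (by simpa using K.add_mem hr hru)

theorem exists_nonneg_on_orderIdeal_of_notMem {h : E} (hu : u ∈ K) (hh : h ∈ orderIdeal K u)
    (hhK : h ∉ K) :
    ∃ g : E →ₗ[ℝ] ℝ, (∀ v ∈ K, v ∈ orderIdeal K u → 0 ≤ g v) ∧ g u = 1 ∧ g h ≤ 0 := by
  let K' : PointedCone ℝ E := K ⊔ PointedCone.hull ℝ {-h}
  have hKK' : K ≤ K' := le_sup_left
  have hneg : -u ∉ K' := fun hmem => by
    obtain ⟨c, hc, w, hw, hcw⟩ := Submodule.mem_sup.1 hmem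
    obtain ⟨⟨s, hs⟩, rfl⟩ := Submodule.mem_span_singleton.1 hw
    change c + s • -h = -u at hcw
    rcases hs.eq_or_lt with rfl | hs
    · rw [zero_smul, add_zero] at hcw
      exact neg_notMem_of_mem_orderIdeal_of_notMem hu hh hhK (hcw ▸ hc)
    · have hsh : s • h = c + u := by
        rw [← neg_neg u, ← hcw]
        module
      refine hhK ?_
      simpa only [← hsh, smul_smul, inv_mul_cancel₀ hs.ne', one_smul] using
        K.smul_mem (inv_nonneg.2 hs.le) (K.add_mem hc hu)
  obtain ⟨g, hg, hgu⟩ := exists_nonneg_on_orderIdeal_of_neg_notMem (hKK' hu) hneg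
  refine ⟨g, fun v hv hvu => hg v (hKK' hv) (orderIdeal_mono hKK' hvu), hgu, ?_⟩
  have hgh := hg (-h) (le_sup_right (a := K) (Submodule.mem_span_singleton_self _))
    (neg_mem (orderIdeal_mono hKK' hh))
  rwa [map_neg, neg_nonneg] at hgh

end Cone

/-! ### The perturbation as an order unit -/

/-- The perturbation `1 + ∑ xᵢ^{2d}`, which dominates every polynomial of degree at most `2d`
modulo sums of squares of polynomials of degree at most `d`. -/
noncomputable def perturb (σ : Type*) [Fintype σ] (d : ℕ) : MvPolynomial σ ℝ :=
  1 + ∑ i, X i ^ (2 * d)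

theorem monomial_one_mul_monomial_one {σ R : Type*} [CommSemiring R] (α β : σ →₀ ℕ) :
    monomial α (1 : R) * monomial β 1 = monomial (α + β) 1 := by
  rw [monomial_mul, one_mul]

theorem totalDegree_monomial_one_le {σ R : Type*} [CommSemiring R] {α : σ →₀ ℕ} {d : ℕ}
    (h : α.degree ≤ d) : (monomial α (1 : R)).totalDegree ≤ d :=
  (totalDegree_monomial_le α 1).trans h

theorem support_add_single_ssubset {σ M : Type*} [AddMonoid M] {α β : σ →₀ M} {k k' : σ} {c : M}
    (hβ : β.support ⊆ α.support) (hk : k ∈ α.support) (hk' : k' ∈ α.support) (hne : k' ≠ k)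
    (h0 : β k' = 0) : (β + Finsupp.single k c).support ⊂ α.support := by
  classical
  refine (Finset.ssubset_iff_of_subset ?_).2 ⟨k', hk', by simp [h0, hne.symm]⟩
  exact Finsupp.support_add.trans <| Finset.union_subset hβ <|
    Finsupp.support_single_subset.trans (Finset.singleton_subset_iff.2 hk)

section MonomialBound

variable {σ : Type*} {d : ℕ} {K : PointedCone ℝ (MvPolynomial σ ℝ)}

theorem monomial_add_monomial_sub_mem
    (hK : ∀ t : MvPolynomial σ ℝ, t.totalDegree ≤ d → t * t ∈ K) {β γ : σ →₀ ℕ}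
    (hβ : β.degree ≤ d) (hγ : γ.degree ≤ d) :
    monomial (β + β) 1 + monomial (γ + γ) 1 - (2 : ℝ) • monomial (β + γ) (1 : ℝ) ∈ K := by
  convert hK (monomial β 1 - monomial γ 1) ((totalDegree_sub _ _).trans
    (max_le (totalDegree_monomial_one_le hβ) (totalDegree_monomial_one_le hγ))) using 1
  simp only [← monomial_one_mul_monomial_one, two_smul]
  ring

theorem X_pow_two_mul_mem (hK : ∀ t : MvPolynomial σ ℝ, t.totalDegree ≤ d → t * t ∈ K) (i : σ) :
    (X i ^ (2 * d) : MvPolynomial σ ℝ) ∈ K := by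
  rw [two_mul, pow_add]
  exact hK (X i ^ d) (by simp)

variable [Fintype σ]

theorem perturb_sub_one_mem (hK : ∀ t : MvPolynomial σ ℝ, t.totalDegree ≤ d → t * t ∈ K) :
    perturb σ d - 1 ∈ K := by
  rw [perturb, add_sub_cancel_left]
  exact K.sum_mem fun i _ => X_pow_two_mul_mem hK i

theorem perturb_sub_X_pow_mem (hK : ∀ t : MvPolynomial σ ℝ, t.totalDegree ≤ d → t * t ∈ K)
    (i : σ) : perturb σ d - X i ^ (2 * d) ∈ K := by
  classical
  rw [perturb, ← Finset.add_sum_erase _ _ (Finset.mem_univ i), add_left_comm,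
    add_sub_cancel_left]
  exact K.add_mem (by simpa using hK 1 (by simp)) (K.sum_mem fun j _ => X_pow_two_mul_mem hK j)

theorem perturb_sub_monomial_mem_of_path
    (hK : ∀ t : MvPolynomial σ ℝ, t.totalDegree ≤ d → t * t ∈ K) {l : ℕ → σ →₀ ℕ} {c : ℕ}
    (hl : ∀ s, s + 1 < c → l s + l (s + 2) = l (s + 1) + l (s + 1))
    (hdeg : ∀ s ≤ c, (l s).degree ≤ d) (h0 : perturb σ d - monomial (l 0 + l 0) 1 ∈ K)
    (hc : perturb σ d - monomial (l c + l c) 1 ∈ K) {s : ℕ} (hs : s ≤ c) :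
    perturb σ d - monomial (l s + l s) 1 ∈ K := by
  refine mem_of_concave_of_endpoints_mem (fun s => perturb σ d - monomial (l s + l s) 1)
    (fun s hs => ?_) h0 hc hs
  convert monomial_add_monomial_sub_mem hK (hdeg s (by lia)) (hdeg (s + 2) (by lia)) using 1
  rw [hl s hs]
  module

theorem perturb_sub_monomial_single_mem
    (hK : ∀ t : MvPolynomial σ ℝ, t.totalDegree ≤ d → t * t ∈ K) (i : σ) {s : ℕ} (hs : s ≤ d) :
    perturb σ d - monomial (Finsupp.single i s + Finsupp.single i s) 1 ∈ K := by
  refine perturb_sub_monomial_mem_of_path hK (l := fun s => Finsupp.single i s) (fun s _ => ?_)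
    (fun s hs => by simpa using hs) (by simpa using perturb_sub_one_mem hK) ?_ hs
  · simp only [← Finsupp.single_add]
    congr 1
    ring
  · rw [← Finsupp.single_add, ← two_mul, ← X_pow_eq_monomial]
    exact perturb_sub_X_pow_mem hK i

theorem perturb_sub_monomial_mem_of_exchange
    (hK : ∀ t : MvPolynomial σ ℝ, t.totalDegree ≤ d → t * t ∈ K) {β : σ →₀ ℕ} {i j : σ} {c : ℕ}
    (hdeg : β.degree + c ≤ d)
    (hi : perturb σ d -
      monomial (β + Finsupp.single i c + (β + Finsupp.single i c)) 1 ∈ K)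
    (hj : perturb σ d -
      monomial (β + Finsupp.single j c + (β + Finsupp.single j c)) 1 ∈ K) {s : ℕ} (hs : s ≤ c) :
    perturb σ d - monomial (β + Finsupp.single j (c - s) + Finsupp.single i s +
      (β + Finsupp.single j (c - s) + Finsupp.single i s)) 1 ∈ K := by
  refine perturb_sub_monomial_mem_of_path hK
    (l := fun s => β + Finsupp.single j (c - s) + Finsupp.single i s) (fun s hs => ?_)
    (fun s hs => ?_) (by simpa using hj) (by simpa using hi) hs
  · classical
    ext k
    simp only [Finsupp.add_apply, Finsupp.single_apply]
    split_ifs <;> lia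
  · simp only [map_add, Finsupp.degree_single]
    lia

/-- Replacing a factor `xᵢ^a xⱼ^b` by `xᵢ^(a + b)` or `xⱼ^(a + b)` removes a variable, and the
monomial lies between these two on a concave path. -/
theorem perturb_sub_monomial_mem (hK : ∀ t : MvPolynomial σ ℝ, t.totalDegree ≤ d → t * t ∈ K)
    {α : σ →₀ ℕ} (hα : α.degree ≤ d) : perturb σ d - monomial (α + α) 1 ∈ K := by
  classical
  induction hS : α.support using Finset.strongInduction generalizing α with
  | H S ih =>
  subst hS
  rcases Finset.eq_empty_or_nonempty α.support with h0 | ⟨i, hi⟩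
  · simpa [Finsupp.support_eq_empty.1 h0] using perturb_sub_one_mem hK
  have hαi : α.erase i + Finsupp.single i (α i) = α := Finsupp.erase_add_single i α
  rcases Finset.eq_empty_or_nonempty (α.erase i).support with h0 | ⟨j, hj⟩
  · rw [Finsupp.support_eq_empty.1 h0, zero_add] at hαi
    rw [← hαi] at hα ⊢
    exact perturb_sub_monomial_single_mem hK i (by simpa using hα)
  obtain ⟨hji, hjα⟩ : j ≠ i ∧ α j ≠ 0 := by simpa [Finsupp.support_erase] using hj
  let β := (α.erase i).erase j
  have hβ : β + Finsupp.single j (α j) + Finsupp.single i (α i) = α := by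
    rw [← Finsupp.erase_ne hji, Finsupp.erase_add_single, hαi]
  have hdeg : β.degree + (α j + α i) = α.degree := by
    rw [← hβ, map_add, map_add, Finsupp.degree_single, Finsupp.degree_single, hβ, add_assoc]
  have hβS : β.support ⊆ α.support := by
    simp only [β, Finsupp.support_erase]
    exact (Finset.erase_subset _ _).trans (Finset.erase_subset _ _)
  have hmem : ∀ k ∈ α.support, ∀ k' ∈ α.support, k' ≠ k → β k' = 0 →
      perturb σ d - monomial (β + Finsupp.single k (α j + α i) +
        (β + Finsupp.single k (α j + α i))) 1 ∈ K := fun k hk k' hk' hkk' h0 =>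
    ih _ (support_add_single_ssubset hβS hk hk' hkk' h0)
      (by rw [map_add, Finsupp.degree_single, hdeg]; exact hα) rfl
  have hjS : j ∈ α.support := by simpa using hjα
  have h := perturb_sub_monomial_mem_of_exchange hK (hdeg.trans_le hα)
    (hmem i hi j hjS hji Finsupp.erase_same)
    (hmem j hjS i hi hji.symm ((Finsupp.erase_ne hji.symm).trans Finsupp.erase_same))
    (Nat.le_add_left (α i) (α j))
  rwa [Nat.add_sub_cancel, hβ] at h

end MonomialBound

section OrderUnit

variable {σ ι : Type*} [DecidableEq ι] {d : ℕ}

/-- The perturbation `(1 + ∑ xᵢ^{2d}) I`, an order unit for the symmetric matrices of degree at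
most `2d`. -/
noncomputable def perturbMatrix (ι σ : Type*) [Fintype σ] [DecidableEq ι] (d : ℕ) :
    Matrix ι ι (MvPolynomial σ ℝ) :=
  perturb σ d • 1

/-- The cone `K` contains all rank one squares `v vᵀ` with `deg v ≤ d`, hence every SOS matrix of
degree at most `2d`. -/
def ContainsSquares (K : PointedCone ℝ (Matrix ι ι (MvPolynomial σ ℝ)))
    (d : ℕ) : Prop :=
  ∀ v : ι → MvPolynomial σ ℝ, (∀ a, (v a).totalDegree ≤ d) → vecMulVec v v ∈ K

theorem vecMulVec_piSingle {R : Type*} [Semiring R] (a b : ι) (s t : R) :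
    vecMulVec (Pi.single a s) (Pi.single b t) = Matrix.single a b (s * t) := by
  ext1 i j
  simp only [vecMulVec_apply, Matrix.single_apply, Pi.single_apply, @eq_comm _ a i,
    @eq_comm _ b j]
  by_cases h1 : i = a <;> by_cases h2 : j = b <;> simp [h1, h2]

theorem totalDegree_piSingle_le {R : Type*} [CommSemiring R] {t : MvPolynomial σ R}
    (ht : t.totalDegree ≤ d) (a b : ι) :
    ((Pi.single a t : ι → MvPolynomial σ R) b).totalDegree ≤ d := by
  rw [Pi.single_apply]
  split_ifs <;> simp [ht]

theorem exists_add_eq_of_degree_le_two_mul {γ : σ →₀ ℕ} (hγ : γ.degree ≤ 2 * d) :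
    ∃ α β : σ →₀ ℕ, α + β = γ ∧ α.degree ≤ d ∧ β.degree ≤ d := by
  rcases le_total γ.degree d with h | h
  · exact ⟨γ, 0, by simp, h, by simp⟩
  · obtain ⟨α, hα, hdeg⟩ := Finsupp.exists_le_degree_eq γ d h
    have hadd : α + (γ - α) = γ := add_tsub_cancel_of_le hα
    refine ⟨α, γ - α, hadd, hdeg.le, ?_⟩
    have := congrArg Finsupp.degree hadd
    rw [map_add] at this
    lia

theorem perturbMatrix_eq_sum_single [Fintype σ] [Fintype ι] :
    perturbMatrix ι σ d = ∑ a, Matrix.single a a (perturb σ d) := by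
  rw [perturbMatrix, Matrix.smul_one_eq_diagonal, Matrix.sum_single_eq_diagonal]

theorem smul_perturbMatrix [Fintype σ] (a : ℝ) :
    a • perturbMatrix ι σ d = (C a * perturb σ d) • 1 := by
  rw [perturbMatrix, ← smul_assoc, smul_eq_C_mul]

theorem vecMulVec_monomial_add_smul_monomial (a b : ι) (α β : σ →₀ ℕ) {e : ℝ}
    (he : e * e = 1) :
    vecMulVec (Pi.single a (monomial α (1 : ℝ)) + Pi.single b (e • monomial β (1 : ℝ)))
        (Pi.single a (monomial α (1 : ℝ)) + Pi.single b (e • monomial β (1 : ℝ))) =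
      Matrix.single a a (monomial (α + α) (1 : ℝ)) + Matrix.single b b (monomial (β + β) 1) +
        e • (Matrix.single a b (monomial (α + β) 1) +
          Matrix.single b a (monomial (α + β) 1)) := by
  simp only [vecMulVec_add, add_vecMulVec, vecMulVec_piSingle, smul_mul_assoc,
    mul_smul_comm, smul_smul, he, one_smul, monomial_one_mul_monomial_one,
    ← Matrix.smul_single, add_comm β α, smul_add]
  abel

namespace ContainsSquares

variable {K : PointedCone ℝ (Matrix ι ι (MvPolynomial σ ℝ))}

theorem single_mul_self_mem (hK : ContainsSquares K d) (a : ι) {t : MvPolynomial σ ℝ}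
    (ht : t.totalDegree ≤ d) : Matrix.single a a (t * t) ∈ K := by
  rw [← vecMulVec_piSingle]
  exact hK (Pi.single a t) (totalDegree_piSingle_le ht a)

variable [Fintype σ]

theorem single_perturb_sub_monomial_mem (hK : ContainsSquares K d) (a : ι) {α : σ →₀ ℕ}
    (hα : α.degree ≤ d) :
    Matrix.single a a (perturb σ d - monomial (α + α) 1) ∈ K :=
  perturb_sub_monomial_mem
    (K := K.comap (Matrix.singleLinearMap ℝ a a : MvPolynomial σ ℝ →ₗ[ℝ] _))
    (fun _ ht => hK.single_mul_self_mem a ht) hα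

theorem single_perturb_mem (hK : ContainsSquares K d) (a : ι) :
    Matrix.single a a (perturb σ d) ∈ K := by
  convert K.add_mem (hK.single_perturb_sub_monomial_mem a (α := 0) (by simp))
    (hK.single_mul_self_mem a (t := 1) (by simp)) using 1
  rw [← Matrix.single_add]
  simp

variable [Finite ι]

theorem perturbMatrix_mem (hK : ContainsSquares K d) : perturbMatrix ι σ d ∈ K := by
  cases nonempty_fintype ι
  rw [perturbMatrix_eq_sum_single]
  exact K.sum_mem fun a _ => hK.single_perturb_mem a

theorem perturbMatrix_sub_single_mem (hK : ContainsSquares K d) (a : ι) :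
    perturbMatrix ι σ d - Matrix.single a a (perturb σ d) ∈ K := by
  cases nonempty_fintype ι
  rw [perturbMatrix_eq_sum_single, ← Finset.add_sum_erase _ _ (Finset.mem_univ a),
    add_sub_cancel_left]
  exact K.sum_mem fun b _ => hK.single_perturb_mem b

theorem two_smul_perturbMatrix_add_mem (hK : ContainsSquares K d) (a b : ι) {γ : σ →₀ ℕ}
    (hγ : γ.degree ≤ 2 * d) {e : ℝ} (he : e * e = 1) :
    (2 : ℝ) • perturbMatrix ι σ d +
      e • (Matrix.single a b (monomial γ 1) + Matrix.single b a (monomial γ 1)) ∈ K := by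
  obtain ⟨α, β, rfl, hα, hβ⟩ := exists_add_eq_of_degree_le_two_mul hγ
  have hsquare := hK (Pi.single a (monomial α 1) + Pi.single b (e • monomial β 1)) fun c =>
    (totalDegree_add _ _).trans <| max_le
      (totalDegree_piSingle_le (totalDegree_monomial_one_le hα) _ _)
      (totalDegree_piSingle_le
        ((totalDegree_smul_le _ _).trans (totalDegree_monomial_one_le hβ)) _ _)
  rw [vecMulVec_monomial_add_smul_monomial a b α β he] at hsquare
  convert K.add_mem (K.add_mem
    (K.add_mem (hK.perturbMatrix_sub_single_mem a) (hK.perturbMatrix_sub_single_mem b))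
    (K.add_mem (hK.single_perturb_sub_monomial_mem a hα)
      (hK.single_perturb_sub_monomial_mem b hβ))) hsquare using 1
  simp only [← Matrix.singleAddMonoidHom_apply, map_sub]
  module

theorem single_add_single_mem_orderIdeal (hK : ContainsSquares K d) (a b : ι) {γ : σ →₀ ℕ}
    (hγ : γ.degree ≤ 2 * d) :
    Matrix.single a b (monomial γ 1) + Matrix.single b a (monomial γ 1) ∈
      orderIdeal K (perturbMatrix ι σ d) := by
  refine ⟨⟨2, ?_⟩, ⟨2, ?_⟩⟩
  · simpa only [one_smul] using hK.two_smul_perturbMatrix_add_mem a b hγ (one_mul 1)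
  · simpa only [neg_one_smul, ← sub_eq_add_neg] using
      hK.two_smul_perturbMatrix_add_mem a b hγ (e := -1) (by norm_num)

end ContainsSquares

theorem matrix_eq_sum_smul_single_monomial [Fintype ι] (H : Matrix ι ι (MvPolynomial σ ℝ)) :
    H = ∑ a, ∑ b, ∑ γ ∈ (H a b).support,
      (H a b).coeff γ • Matrix.single a b (monomial γ (1 : ℝ)) := by
  have hentry : ∀ a b, Matrix.single a b (H a b) = ∑ γ ∈ (H a b).support,
      (H a b).coeff γ • Matrix.single a b (monomial γ (1 : ℝ)) := fun a b => by
    conv_lhs => rw [← support_sum_monomial_coeff (H a b)]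
    rw [← Matrix.singleAddMonoidHom_apply, map_sum]
    refine Finset.sum_congr rfl fun γ _ => ?_
    simp [Matrix.smul_single, smul_monomial]
  conv_lhs => rw [Matrix.matrix_eq_sum_single H]
  simp only [hentry]

theorem ContainsSquares.mem_orderIdeal_of_isSymm [Fintype σ] [Finite ι]
    {K : PointedCone ℝ (Matrix ι ι (MvPolynomial σ ℝ))} (hK : ContainsSquares K d)
    {H : Matrix ι ι (MvPolynomial σ ℝ)} (hH : H.IsSymm)
    (hdeg : ∀ a b, (H a b).totalDegree ≤ 2 * d) : H ∈ orderIdeal K (perturbMatrix ι σ d) := by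
  cases nonempty_fintype ι
  have hsum : H + Hᵀ = ∑ a, ∑ b, ∑ γ ∈ (H a b).support, (H a b).coeff γ •
      (Matrix.single a b (monomial γ (1 : ℝ)) + Matrix.single b a (monomial γ 1)) := by
    conv_lhs => rw [matrix_eq_sum_smul_single_monomial H]
    simp only [Matrix.transpose_sum, ← Finset.sum_add_distrib, Matrix.transpose_smul,
      Matrix.transpose_single, smul_add]
  have hhalf : H = (1 / 2 : ℝ) • (H + Hᵀ) := by
    rw [hH.eq]
    module
  rw [hhalf, hsum]
  exact Submodule.smul_mem _ _ <| Submodule.sum_mem _ fun a _ => Submodule.sum_mem _ fun b _ =>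
    Submodule.sum_mem _ fun γ hγ => Submodule.smul_mem _ _ <|
      hK.single_add_single_mem_orderIdeal a b ((le_totalDegree hγ).trans (hdeg a b))

end OrderUnit

/-! ### The separating functional -/

section Functionals

theorem exists_linearMap_tendsto_of_eventually_abs_le {α E : Type*} [AddCommGroup E] [Module ℝ E]
    (l : Ultrafilter α) {L : α → E →ₗ[ℝ] ℝ} (hb : ∀ v, ∃ B, ∀ᶠ j in l, |L j v| ≤ B) :
    ∃ M : E →ₗ[ℝ] ℝ, ∀ v, Filter.Tendsto (fun j => L j v) l (nhds (M v)) := by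
  have hlim : ∀ v, ∃ r, Filter.Tendsto (fun j => L j v) l (nhds r) := fun v => by
    obtain ⟨B, hB⟩ := hb v
    obtain ⟨r, -, hr⟩ := (isCompact_Icc (a := -B) (b := B)).ultrafilter_le_nhds
      (l.map fun j => L j v) (Filter.le_principal_iff.2 (hB.mono fun j hj => abs_le.1 hj))
    exact ⟨r, hr⟩
  choose M hM using hlim
  exact ⟨linearMapOfTendsto M L (tendsto_pi_nhds.2 hM), hM⟩

/-- The functional `H ↦ (g H + g Hᵀ) / 2`. -/
noncomputable def symmetrize {ι A : Type*} [AddCommMonoid A] [Module ℝ A]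
    (g : Matrix ι ι A →ₗ[ℝ] ℝ) : Matrix ι ι A →ₗ[ℝ] ℝ :=
  (1 / 2 : ℝ) • (g + g ∘ₗ (Matrix.transposeLinearEquiv ι ι ℝ A).toLinearMap)

section Symmetrize

variable {ι A : Type*} [AddCommMonoid A] [Module ℝ A] (g : Matrix ι ι A →ₗ[ℝ] ℝ)

theorem symmetrize_apply (H : Matrix ι ι A) : symmetrize g H = 1 / 2 * (g H + g Hᵀ) :=
  rfl

theorem symmetrize_transpose (H : Matrix ι ι A) : symmetrize g Hᵀ = symmetrize g H := by
  rw [symmetrize_apply, symmetrize_apply, Matrix.transpose_transpose, add_comm]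

theorem symmetrize_of_isSymm {H : Matrix ι ι A} (hH : H.IsSymm) : symmetrize g H = g H := by
  rw [symmetrize_apply, hH.eq]
  ring

end Symmetrize

variable {σ ι : Type*} [Fintype ι]

/-- The sum of the absolute values of all coefficients of a polynomial matrix, which bounds the
functionals that are bounded by `1` on monomials. -/
noncomputable def coeffSum (H : Matrix ι ι (MvPolynomial σ ℝ)) : ℝ :=
  ∑ a, ∑ b, ∑ γ ∈ (H a b).support, |(H a b).coeff γ|

theorem abs_le_coeffSum_mul [DecidableEq ι] {f : Matrix ι ι (MvPolynomial σ ℝ) →ₗ[ℝ] ℝ} {B : ℝ}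
    {H : Matrix ι ι (MvPolynomial σ ℝ)}
    (hf : ∀ a b, ∀ γ ∈ (H a b).support, |f (Matrix.single a b (monomial γ 1))| ≤ B) :
    |f H| ≤ coeffSum H * B := by
  conv_lhs => rw [matrix_eq_sum_smul_single_monomial H]
  simp only [map_sum, map_smul, smul_eq_mul, coeffSum, Finset.sum_mul]
  refine (Finset.abs_sum_le_sum_abs _ _).trans (Finset.sum_le_sum fun a _ => ?_)
  refine (Finset.abs_sum_le_sum_abs _ _).trans (Finset.sum_le_sum fun b _ => ?_)
  refine (Finset.abs_sum_le_sum_abs _ _).trans (Finset.sum_le_sum fun γ hγ => ?_)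
  rw [abs_mul]
  exact mul_le_mul_of_nonneg_left (hf a b γ hγ) (abs_nonneg _)

end Functionals

theorem ContainsSquares.abs_symmetrize_single_le {σ ι : Type*} [Fintype σ] [Finite ι]
    [DecidableEq ι]
    {K : PointedCone ℝ (Matrix ι ι (MvPolynomial σ ℝ))} {d : ℕ} (hK : ContainsSquares K d)
    {g : Matrix ι ι (MvPolynomial σ ℝ) →ₗ[ℝ] ℝ}
    (hg : ∀ H ∈ K, H ∈ orderIdeal K (perturbMatrix ι σ d) → 0 ≤ g H)
    (hg1 : g (perturbMatrix ι σ d) = 1) (a b : ι) {γ : σ →₀ ℕ} (hγ : γ.degree ≤ 2 * d) :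
    |symmetrize g (Matrix.single a b (monomial γ 1))| ≤ 1 := by
  have hsign : ∀ e : ℝ, e * e = 1 → 0 ≤ 2 + e *
      (g (Matrix.single a b (monomial γ 1)) + g (Matrix.single b a (monomial γ 1))) :=
    fun e he => by
      simpa only [map_add, map_smul, hg1, smul_eq_mul, mul_one] using
        hg _ (hK.two_smul_perturbMatrix_add_mem a b hγ he)
        (Submodule.add_mem _
          (Submodule.smul_mem _ _ (self_mem_orderIdeal hK.perturbMatrix_mem))
          (Submodule.smul_mem _ _ (hK.single_add_single_mem_orderIdeal a b hγ)))
  have hpos := hsign 1 (by norm_num)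
  have hneg := hsign (-1) (by norm_num)
  rw [symmetrize_apply, Matrix.transpose_single, abs_le]
  constructor <;> linarith

section QuadraticModule

variable {n m : ℕ} {ι κ : Type*} [Fintype ι] [Fintype κ] {ν : Measure (Fin m → ℝ)}
  {G : Matrix κ κ (MvPolynomial (Fin n ⊕ Fin m) ℝ)} {H : Matrix ι ι (MvPolynomial (Fin n) ℝ)}

/-- The matrices `Σ₀ + ∫_Y ⟨Σ, G⟩_p dν` with SOS matrices `Σ₀`, `Σ` of arbitrary degree. -/
def quadraticModule (ι : Type*) [Fintype ι] (ν : Measure (Fin m → ℝ))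
    (G : Matrix κ κ (MvPolynomial (Fin n ⊕ Fin m) ℝ)) :
    Set (Matrix ι ι (MvPolynomial (Fin n) ℝ)) :=
  {H | ∃ S0 Sg, IsSOSMatrix S0 ∧ IsSOSMatrix Sg ∧ H = S0 + integLram ν Sg G}

theorem IsSOSMatrix.mem_quadraticModule (hH : IsSOSMatrix H) : H ∈ quadraticModule ι ν G :=
  ⟨H, 0, hH, .zero, by rw [integLram_zero, add_zero]⟩

theorem integLram_mem_quadraticModule
    {S : Matrix (ι × κ) (ι × κ) (MvPolynomial (Fin n ⊕ Fin m) ℝ)} (hS : IsSOSMatrix S) :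
    integLram ν S G ∈ quadraticModule ι ν G :=
  ⟨0, S, .zero, hS, (zero_add _).symm⟩

theorem mul_self_smul_mem_quadraticModule (hmom : momentsFinite ν)
    (hH : H ∈ quadraticModule ι ν G) (t : MvPolynomial (Fin n) ℝ) :
    (t * t) • H ∈ quadraticModule ι ν G := by
  obtain ⟨S, P, hS, hP, rfl⟩ := hH
  exact ⟨_, _, hS.mul_self_smul t, hP.mul_self_smul (rename Sum.inl t), by
    rw [← map_mul, hmom.integLram_rename_smul, smul_add]⟩

theorem isSymm_of_mem_quadraticModule (hG : G.IsSymm) (hH : H ∈ quadraticModule ι ν G) :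
    H.IsSymm := by
  obtain ⟨S, P, hS, hP, rfl⟩ := hH
  exact hS.isSymm.add (integLram_isSymm hP.isSymm hG)

theorem exists_forall_hasCert (hH : H ∈ quadraticModule ι ν G) :
    ∃ N, ∀ d ≥ N, ∀ k ≥ N, HasCert ν G d k H := by
  obtain ⟨S, P, hS, hP, rfl⟩ := hH
  refine ⟨matDeg S + matDegX P + matDegY P + 2 * ((matDegX G + 1) / 2), fun d hd k hk =>
    ⟨S, P, hS, ?_, hP, ?_, ?_, rfl⟩⟩ <;> lia

end QuadraticModule

section Separation

variable {n m : ℕ} {ι κ : Type*} [Fintype ι] [DecidableEq ι] [Fintype κ]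
  {ν : Measure (Fin m → ℝ)} {G : Matrix κ κ (MvPolynomial (Fin n ⊕ Fin m) ℝ)}
  {F : Matrix ι ι (MvPolynomial (Fin n) ℝ)} {ε : ℝ}

theorem exists_functional_of_not_hasCert (hmom : momentsFinite ν) {d k : ℕ} (hF : F.IsSymm)
    (hFd : ∀ a b, (F a b).totalDegree ≤ 2 * d)
    (hcert : ¬ HasCert ν G d k (F + ε • perturbMatrix ι (Fin n) d)) :
    ∃ L : Matrix ι ι (MvPolynomial (Fin n) ℝ) →ₗ[ℝ] ℝ,
      (∀ H, L Hᵀ = L H) ∧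
      (∀ H : Matrix ι ι (MvPolynomial (Fin n) ℝ), H.IsSymm →
        (∀ a b, (H a b).totalDegree ≤ 2 * d) → HasCert ν G d k H → 0 ≤ L H) ∧
      (∀ a b (γ : Fin n →₀ ℕ), γ.degree ≤ 2 * d →
        |L (Matrix.single a b (monomial γ 1))| ≤ 1) ∧
      L F ≤ -ε := by
  have hK : ContainsSquares (certCone ι hmom G d k) d := vecMulVec_mem_certCone hmom
  obtain ⟨g, hg, hg1, hgF⟩ := exists_nonneg_on_orderIdeal_of_notMem hK.perturbMatrix_mem
    (Submodule.add_mem _ (hK.mem_orderIdeal_of_isSymm hF hFd)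
      (Submodule.smul_mem _ ε (self_mem_orderIdeal hK.perturbMatrix_mem))) hcert
  refine ⟨symmetrize g, symmetrize_transpose g, fun H hH hHd hHc => ?_,
    fun a b γ => hK.abs_symmetrize_single_le hg hg1 a b, ?_⟩
  · rw [symmetrize_of_isSymm g hH]
    exact hg H hHc (hK.mem_orderIdeal_of_isSymm hH hHd)
  · rw [map_add, map_smul, hg1, smul_eq_mul] at hgF
    rw [symmetrize_of_isSymm g hF]
    linarith

theorem exists_functional_of_forall_exists_not_hasCert (hmom : momentsFinite ν) (hG : G.IsSymm)
    (hF : F.IsSymm)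
    (hcert : ∀ N : ℕ, ∃ d ≥ N, ∃ k ≥ N, ¬ HasCert ν G d k (F + ε • perturbMatrix ι (Fin n) d)) :
    ∃ L : Matrix ι ι (MvPolynomial (Fin n) ℝ) →ₗ[ℝ] ℝ,
      (∀ H, L Hᵀ = L H) ∧ (∀ H ∈ quadraticModule ι ν G, 0 ≤ L H) ∧
      (∀ a b (γ : Fin n →₀ ℕ), |L (Matrix.single a b (monomial γ 1))| ≤ 1) ∧ L F ≤ -ε := by
  choose d hd k hk hdk using fun j => hcert (j + matDeg F)
  choose L hLsymm hLpos hLmon hLF using fun j => exists_functional_of_not_hasCert hmom hF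
    (matDeg_le_iff.1 (by linarith [hd j])) (hdk j)
  have htop : (Filter.hyperfilter ℕ : Filter ℕ) ≤ Filter.atTop :=
    Filter.hyperfilter_le_cofinite.trans_eq Nat.cofinite_eq_atTop
  have hmon : ∀ a b (γ : Fin n →₀ ℕ), ∀ j ≥ γ.degree,
      |L j (Matrix.single a b (monomial γ 1))| ≤ 1 := fun a b γ j hj =>
    hLmon j a b γ (by linarith [hd j])
  have hdeg : ∀ H : Matrix ι ι (MvPolynomial (Fin n) ℝ), ∀ j ≥ matDeg H, ∀ a b,
      (H a b).totalDegree ≤ 2 * d j := fun H j hj => matDeg_le_iff.1 (by linarith [hd j])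
  obtain ⟨M, hM⟩ := exists_linearMap_tendsto_of_eventually_abs_le (Filter.hyperfilter ℕ)
    (L := L) fun H => ⟨coeffSum H * 1, htop <| Filter.eventually_atTop.2 ⟨matDeg H, fun j hj =>
      abs_le_coeffSum_mul fun a b γ hγ =>
        hmon a b γ j (((le_totalDegree hγ).trans (matDeg_le_iff.1 le_rfl a b)).trans hj)⟩⟩
  refine ⟨M, fun H => ?_, fun H hH => ?_, fun a b γ => ?_, ?_⟩
  · exact tendsto_nhds_unique (hM _) (by simpa only [hLsymm] using hM H)
  · obtain ⟨N, hN⟩ := exists_forall_hasCert hH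
    refine ge_of_tendsto (hM H) (htop <| Filter.eventually_atTop.2 ⟨N + matDeg H, fun j hj =>
      hLpos j H (isSymm_of_mem_quadraticModule hG hH) (hdeg H j ?_) (hN _ ?_ _ ?_)⟩)
    · linarith
    · linarith [hd j]
    · linarith [hk j]
  · exact le_of_tendsto (hM _).abs (htop <| Filter.eventually_atTop.2 ⟨_, hmon a b γ⟩)
  · exact le_of_tendsto (hM F) (Filter.Eventually.of_forall hLF)

end Separation

/-! ### Positivity on the box -/

section BoxMonoid

variable {σ : Type*}

/-- The monoid generated by the polynomials `1 ± xᵢ`, which are nonnegative on `[-1, 1]ⁿ`. -/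
noncomputable def boxMonoid (σ : Type*) : Submonoid (MvPolynomial σ ℝ) :=
  Submonoid.closure (Set.range (fun i => 1 + X i) ∪ Set.range (fun i => 1 - X i))

theorem one_add_X_mem_boxMonoid (i : σ) : 1 + X i ∈ boxMonoid σ :=
  Submonoid.subset_closure (Or.inl ⟨i, rfl⟩)

theorem one_sub_X_mem_boxMonoid (i : σ) : 1 - X i ∈ boxMonoid σ :=
  Submonoid.subset_closure (Or.inr ⟨i, rfl⟩)

theorem le_of_convex_of_bounded {b : ℕ → ℝ} {B : ℝ}
    (hconv : ∀ r, 0 ≤ b r - 2 * b (r + 1) + b (r + 2)) (hB : ∀ r, b r ≤ B) : b 1 ≤ b 0 := by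
  by_contra! h
  have hstep : ∀ r, b 1 - b 0 ≤ b (r + 1) - b r := fun r => by
    induction r with
    | zero => exact le_rfl
    | succ r ih => linarith [hconv r]
  have hlin : ∀ r : ℕ, b 0 + r * (b 1 - b 0) ≤ b r := fun r => by
    induction r with
    | zero => simp
    | succ r ih =>
      push_cast
      linarith [hstep r]
  obtain ⟨r, hr⟩ := exists_nat_gt ((B - b 0) / (b 1 - b 0))
  rw [div_lt_iff₀ (by linarith)] at hr
  linarith [hlin r, hB r]

/-- A functional that is nonnegative on squares and bounded on the monomial multiples of each
polynomial; these are the hypotheses of the moment problem on `[-1, 1]ⁿ`. -/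
structure IsBoundedPositive (l : MvPolynomial σ ℝ →ₗ[ℝ] ℝ) : Prop where
  nonneg : ∀ t, 0 ≤ l (t * t)
  bounded : ∀ t, ∃ B, ∀ α, |l (monomial α 1 * t)| ≤ B

namespace IsBoundedPositive

variable {l : MvPolynomial σ ℝ →ₗ[ℝ] ℝ}

/-- The sequence `l (xᵢ^{2r} t²)` is convex and bounded, hence nonincreasing. -/
theorem nonneg_one_sub_X_sq_mul (hl : IsBoundedPositive l) (i : σ) (t : MvPolynomial σ ℝ) :
    0 ≤ l ((1 - X i ^ 2) * (t * t)) := by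
  obtain ⟨B, hB⟩ := hl.bounded (t * t)
  have hle : l (X i ^ (2 * 1) * (t * t)) ≤ l (X i ^ (2 * 0) * (t * t)) :=
    le_of_convex_of_bounded (b := fun r => l (X i ^ (2 * r) * (t * t))) (B := B)
      (fun r => by
        have hsq : X i ^ r * (1 - X i ^ 2) * t * (X i ^ r * (1 - X i ^ 2) * t) =
            X i ^ (2 * r) * (t * t) - (2 : ℝ) • (X i ^ (2 * (r + 1)) * (t * t)) +
              X i ^ (2 * (r + 2)) * (t * t) := by
          rw [two_smul]
          ring
        have hnonneg := hl.nonneg (X i ^ r * (1 - X i ^ 2) * t)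
        rwa [hsq, map_add, map_sub, map_smul, smul_eq_mul] at hnonneg)
      (fun r => by
        simpa only [← X_pow_eq_monomial] using (abs_le.1 (hB (Finsupp.single i (2 * r)))).2)
  simpa [sub_mul] using hle

theorem nonneg_mul_of_mul_self_add (hl : IsBoundedPositive l) {v : MvPolynomial σ ℝ} {i : σ}
    (hv : v * v + (1 - X i ^ 2) = (2 : ℝ) • v) (t : MvPolynomial σ ℝ) : 0 ≤ l (v * (t * t)) := by
  have hsplit : v * t * (v * t) + (1 - X i ^ 2) * (t * t) = (2 : ℝ) • (v * (t * t)) := by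
    rw [← smul_mul_assoc, ← hv]
    ring
  have hl2 := congrArg l hsplit
  rw [map_add, map_smul, smul_eq_mul] at hl2
  linarith [hl.nonneg (v * t), hl.nonneg_one_sub_X_sq_mul i t]

theorem mulLeft (hl : IsBoundedPositive l) {w : MvPolynomial σ ℝ}
    (hw : ∀ t, 0 ≤ l (w * (t * t))) : IsBoundedPositive (l ∘ₗ LinearMap.mulLeft ℝ w) where
  nonneg := hw
  bounded t := by
    obtain ⟨B, hB⟩ := hl.bounded (w * t)
    exact ⟨B, fun α => by simpa [mul_left_comm w] using hB α⟩

theorem nonneg_boxMonoid_mul (hl : IsBoundedPositive l) {w : MvPolynomial σ ℝ}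
    (hw : w ∈ boxMonoid σ) (t : MvPolynomial σ ℝ) : 0 ≤ l (w * (t * t)) := by
  induction hw using Submonoid.closure_induction generalizing l t with
  | mem w hw =>
    rcases hw with ⟨i, rfl⟩ | ⟨i, rfl⟩ <;>
      exact hl.nonneg_mul_of_mul_self_add (i := i) (by rw [two_smul]; ring) t
  | one => simpa using hl.nonneg t
  | mul v w _ _ ihv ihw => simpa [mul_assoc] using ihw (hl.mulLeft (ihv hl)) t

end IsBoundedPositive

end BoxMonoid

section BoxPositive

variable {σ ι : Type*}

/-- A symmetric functional that is nonnegative on the products of elements of `boxMonoid` with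
elements of `P`: the algebraic trace of a matrix measure supported on the box. -/
structure IsBoxPositive (P : Set (Matrix ι ι (MvPolynomial σ ℝ)))
    (f : Matrix ι ι (MvPolynomial σ ℝ) →ₗ[ℝ] ℝ) : Prop where
  transpose : ∀ H, f Hᵀ = f H
  nonneg : ∀ w ∈ boxMonoid σ, ∀ H ∈ P, 0 ≤ f (w • H)

variable {P : Set (Matrix ι ι (MvPolynomial σ ℝ))}
  {f g : Matrix ι ι (MvPolynomial σ ℝ) →ₗ[ℝ] ℝ}

theorem isBoxPositive_of_abs_le_one [Finite ι] [DecidableEq ι]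
    (hPsq : ∀ H ∈ P, ∀ t : MvPolynomial σ ℝ, (t * t) • H ∈ P)
    (hsymm : ∀ H, f Hᵀ = f H) (hpos : ∀ H ∈ P, 0 ≤ f H)
    (hb : ∀ a b γ, |f (Matrix.single a b (monomial γ 1))| ≤ 1) : IsBoxPositive P f := by
  cases nonempty_fintype ι
  refine ⟨hsymm, fun w hw H hH => ?_⟩
  have hl : IsBoundedPositive
      (f ∘ₗ (LinearMap.toSpanSingleton (MvPolynomial σ ℝ) _ H).restrictScalars ℝ) :=
    { nonneg := fun t => by simpa using hpos _ (hPsq H hH t)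
      bounded := fun t => ⟨coeffSum (t • H) * 1, fun α => by
        have hα := abs_le_coeffSum_mul (B := 1) (H := t • H)
          (f := f ∘ₗ DistribSMul.toLinearMap ℝ _ (monomial α (1 : ℝ))) fun a b γ _ => by
            simpa [Matrix.smul_single, monomial_mul] using hb a b (α + γ)
        simpa [smul_smul] using hα⟩ }
  simpa using hl.nonneg_boxMonoid_mul hw 1

namespace IsBoxPositive

theorem comp_smul (hf : IsBoxPositive P f) {w : MvPolynomial σ ℝ} (hw : w ∈ boxMonoid σ) :
    IsBoxPositive P (f ∘ₗ DistribSMul.toLinearMap ℝ _ w) where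
  transpose H := by simpa using hf.transpose (w • H)
  nonneg v hv H hH := by simpa [smul_smul] using hf.nonneg (w * v) (mul_mem hw hv) H hH

theorem smul (hf : IsBoxPositive P f) {r : ℝ} (hr : 0 ≤ r) : IsBoxPositive P (r • f) where
  transpose H := by simp [hf.transpose]
  nonneg w hw H hH := by simpa using mul_nonneg hr (hf.nonneg w hw H hH)

theorem add (hf : IsBoxPositive P f) (hg : IsBoxPositive P g) : IsBoxPositive P (f + g) where
  transpose H := by simp [hf.transpose, hg.transpose]
  nonneg w hw H hH := by simpa using add_nonneg (hf.nonneg w hw H hH) (hg.nonneg w hw H hH)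

theorem apply_nonneg (hf : IsBoxPositive P f) {H : Matrix ι ι (MvPolynomial σ ℝ)} (hH : H ∈ P) :
    0 ≤ f H := by
  simpa using hf.nonneg 1 (one_mem _) H hH

variable [DecidableEq ι]

theorem single_X_mul_le (hf : IsBoxPositive P f)
    (hPvec : ∀ v : ι → MvPolynomial σ ℝ, vecMulVec v v ∈ P) (a : ι) (i : σ)
    (t : MvPolynomial σ ℝ) :
    f (Matrix.single a a (X i * t * (X i * t))) ≤ f (Matrix.single a a (t * t)) := by
  have h := hf.nonneg _ (mul_mem (one_sub_X_mem_boxMonoid i) (one_add_X_mem_boxMonoid i)) _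
    (hPvec (Pi.single a t))
  have hsplit : Matrix.single a a (t * t) =
      ((1 - X i) * (1 + X i) : MvPolynomial σ ℝ) • Matrix.single a a (t * t) +
        Matrix.single a a (X i * t * (X i * t)) := by
    rw [Matrix.smul_single, smul_eq_mul, ← Matrix.single_add]
    congr 1
    ring
  rw [vecMulVec_piSingle] at h
  rw [hsplit, map_add]
  linarith

theorem single_monomial_mul_le (hf : IsBoxPositive P f)
    (hPvec : ∀ v : ι → MvPolynomial σ ℝ, vecMulVec v v ∈ P) (a : ι) (α : σ →₀ ℕ)
    (t : MvPolynomial σ ℝ) :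
    f (Matrix.single a a (monomial α 1 * t * (monomial α 1 * t))) ≤
      f (Matrix.single a a (t * t)) := by
  induction α using Finsupp.induction_linear generalizing t with
  | zero => simp
  | add α β hα hβ =>
    rw [← monomial_one_mul_monomial_one α β, mul_assoc (monomial α 1)]
    exact (hα _).trans (hβ t)
  | single i k =>
    rw [← X_pow_eq_monomial]
    induction k with
    | zero => simp
    | succ k ih =>
      rw [pow_succ', mul_assoc (X i)]
      exact (hf.single_X_mul_le hPvec a i _).trans ih

theorem single_one_nonneg (hf : IsBoxPositive P f)
    (hPvec : ∀ v : ι → MvPolynomial σ ℝ, vecMulVec v v ∈ P) (a : ι) :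
    0 ≤ f (Matrix.single a a 1) := by
  simpa [vecMulVec_piSingle] using hf.apply_nonneg (hPvec (Pi.single a 1))

theorem apply_one_nonneg [Finite ι] (hf : IsBoxPositive P f)
    (hPvec : ∀ v : ι → MvPolynomial σ ℝ, vecMulVec v v ∈ P) : 0 ≤ f 1 := by
  cases nonempty_fintype ι
  rw [← Matrix.sum_single_one, map_sum]
  exact Finset.sum_nonneg fun b _ => hf.single_one_nonneg hPvec b

theorem single_one_le [Finite ι] (hf : IsBoxPositive P f)
    (hPvec : ∀ v : ι → MvPolynomial σ ℝ, vecMulVec v v ∈ P) (a : ι) :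
    f (Matrix.single a a 1) ≤ f 1 := by
  cases nonempty_fintype ι
  rw [← Matrix.sum_single_one, map_sum]
  exact Finset.single_le_sum (f := fun b => f (Matrix.single b b 1))
    (fun b _ => hf.single_one_nonneg hPvec b) (Finset.mem_univ a)

theorem abs_single_monomial_le [Finite ι] (hf : IsBoxPositive P f)
    (hPvec : ∀ v : ι → MvPolynomial σ ℝ, vecMulVec v v ∈ P) (a b : ι) (γ : σ →₀ ℕ) :
    |f (Matrix.single a b (monomial γ 1))| ≤ f 1 := by
  have ha : f (Matrix.single a a (monomial γ 1 * monomial γ 1)) ≤ f 1 := by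
    have hγ := hf.single_monomial_mul_le hPvec a γ 1
    simp only [mul_one] at hγ
    exact hγ.trans (hf.single_one_le hPvec a)
  have hb := hf.single_one_le hPvec b
  have hba : f (Matrix.single b a (monomial γ 1)) = f (Matrix.single a b (monomial γ 1)) := by
    rw [← hf.transpose, Matrix.transpose_single]
  have hadd := hf.apply_nonneg (hPvec (Pi.single a (monomial γ 1) + Pi.single b 1))
  have hsub := hf.apply_nonneg (hPvec (Pi.single a (monomial γ 1) - Pi.single b 1))
  simp only [add_vecMulVec, vecMulVec_add, sub_vecMulVec, vecMulVec_sub, vecMulVec_piSingle,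
    map_add, map_sub, mul_one, one_mul] at hadd hsub
  rw [abs_le]
  constructor <;> linarith

theorem abs_le_coeffSum [Fintype ι] (hf : IsBoxPositive P f)
    (hPvec : ∀ v : ι → MvPolynomial σ ℝ, vecMulVec v v ∈ P) (H : Matrix ι ι (MvPolynomial σ ℝ)) :
    |f H| ≤ coeffSum H * f 1 :=
  abs_le_coeffSum_mul fun a b γ _ => hf.abs_single_monomial_le hPvec a b γ

theorem eq_zero_of_apply_one [Finite ι] (hf : IsBoxPositive P f)
    (hPvec : ∀ v : ι → MvPolynomial σ ℝ, vecMulVec v v ∈ P) (h1 : f 1 = 0) : f = 0 := by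
  cases nonempty_fintype ι
  ext1 H
  exact abs_nonpos_iff.1 (by simpa [h1] using hf.abs_le_coeffSum hPvec H)

end IsBoxPositive

end BoxPositive

/-! ### Extreme states are point evaluations -/

section States

variable {σ ι : Type*} [DecidableEq ι] {P : Set (Matrix ι ι (MvPolynomial σ ℝ))}

/-- The box-positive functionals normalized by `f 1 = 1`, as a subset of the product space of all
functions, whose topology is that of pointwise convergence. -/
def boxStates (P : Set (Matrix ι ι (MvPolynomial σ ℝ))) :
    Set (Matrix ι ι (MvPolynomial σ ℝ) → ℝ) :=
  {φ | ∃ f : Matrix ι ι (MvPolynomial σ ℝ) →ₗ[ℝ] ℝ, IsBoxPositive P f ∧ f 1 = 1 ∧ ⇑f = φ}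

theorem IsBoxPositive.inv_smul_mem_boxStates {f : Matrix ι ι (MvPolynomial σ ℝ) →ₗ[ℝ] ℝ}
    (hf : IsBoxPositive P f) (h1 : 0 < f 1) : ⇑((f 1)⁻¹ • f) ∈ boxStates P :=
  ⟨_, hf.smul (inv_nonneg.2 h1.le), by simp [h1.ne'], rfl⟩

theorem convex_boxStates : Convex ℝ (boxStates P) := by
  rintro _ ⟨f, hf, hf1, rfl⟩ _ ⟨g, hg, hg1, rfl⟩ a b ha hb hab
  exact ⟨a • f + b • g, (hf.smul ha).add (hg.smul hb), by simp [hf1, hg1, hab], rfl⟩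

theorem isClosed_boxStates : IsClosed (boxStates P) := by
  have heq : boxStates P = Set.range (DFunLike.coe :
        (Matrix ι ι (MvPolynomial σ ℝ) →ₗ[ℝ] ℝ) → _) ∩
      ((⋂ H, {φ | φ Hᵀ = φ H}) ∩ (⋂ w ∈ boxMonoid σ, ⋂ H ∈ P, {φ | 0 ≤ φ (w • H)}) ∩
        {φ | φ 1 = 1}) := by
    ext φ
    constructor
    · rintro ⟨f, hf, hf1, rfl⟩
      refine ⟨⟨f, rfl⟩, ⟨Set.mem_iInter.2 hf.transpose, ?_⟩, hf1⟩
      simp only [Set.mem_iInter]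
      exact hf.nonneg
    · rintro ⟨⟨f, rfl⟩, ⟨hs, hn⟩, h1⟩
      simp only [Set.mem_iInter] at hs hn
      exact ⟨f, ⟨hs, hn⟩, h1, rfl⟩
  rw [heq]
  refine (LinearMap.isClosed_range_coe _ _ _).inter ((IsClosed.inter ?_ ?_).inter ?_)
  · exact isClosed_iInter fun H => isClosed_eq (continuous_apply _) (continuous_apply _)
  · exact isClosed_biInter fun w _ => isClosed_biInter fun H _ =>
      isClosed_le continuous_const (continuous_apply _)
  · exact isClosed_eq (continuous_apply _) continuous_const

variable [Finite ι]

theorem isCompact_boxStates (hPvec : ∀ v : ι → MvPolynomial σ ℝ, vecMulVec v v ∈ P) :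
    IsCompact (boxStates P) := by
  cases nonempty_fintype ι
  refine (isCompact_univ_pi fun H => isCompact_Icc (a := -coeffSum H)
    (b := coeffSum H)).of_isClosed_subset isClosed_boxStates ?_
  rintro _ ⟨f, hf, hf1, rfl⟩ H -
  exact abs_le.1 (by simpa only [hf1, mul_one] using hf.abs_le_coeffSum hPvec H)

theorem IsBoxPositive.eq_smul_of_add_mem_extremePoints
    {g h : Matrix ι ι (MvPolynomial σ ℝ) →ₗ[ℝ] ℝ} (hg : IsBoxPositive P g)
    (hh : IsBoxPositive P h) (hPvec : ∀ v : ι → MvPolynomial σ ℝ, vecMulVec v v ∈ P)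
    (hgh : ⇑(g + h) ∈ (boxStates P).extremePoints ℝ) : g = g 1 • (g + h) := by
  obtain ⟨⟨f, -, hf1, hfgh⟩, hext⟩ := mem_extremePoints.1 hgh
  have hsum : g 1 + h 1 = 1 := (congrFun hfgh 1).symm.trans hf1
  rcases (hg.apply_one_nonneg hPvec).eq_or_lt with hg1 | hg1
  · rw [hg.eq_zero_of_apply_one hPvec hg1.symm, LinearMap.zero_apply, zero_smul]
  rcases (hh.apply_one_nonneg hPvec).eq_or_lt with hh1 | hh1
  · rw [hh.eq_zero_of_apply_one hPvec hh1.symm, add_zero,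
      show g 1 = 1 by rw [← hsum, ← hh1, add_zero], one_smul]
  have hleft := (hext _ (hg.inv_smul_mem_boxStates hg1) _ (hh.inv_smul_mem_boxStates hh1)
    ⟨g 1, h 1, hg1, hh1, hsum, by
      funext H
      simp [mul_inv_cancel_left₀ hg1.ne', mul_inv_cancel_left₀ hh1.ne']⟩).1
  rw [← DFunLike.coe_injective hleft, smul_inv_smul₀ hg1.ne']

/-- Split `f` as the mean of `H ↦ f ((1 + xᵢ) H)` and `H ↦ f ((1 - xᵢ) H)`. -/
theorem exists_apply_X_smul_of_mem_extremePoints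
    (hPvec : ∀ v : ι → MvPolynomial σ ℝ, vecMulVec v v ∈ P)
    {f : Matrix ι ι (MvPolynomial σ ℝ) →ₗ[ℝ] ℝ} (hf : ⇑f ∈ (boxStates P).extremePoints ℝ)
    (i : σ) : ∃ c : ℝ, |c| ≤ 1 ∧ ∀ H, f ((X i : MvPolynomial σ ℝ) • H) = c * f H := by
  obtain ⟨f', hpos, hf1, hff'⟩ := (mem_extremePoints.1 hf).1
  obtain rfl : f' = f := DFunLike.coe_injective hff'
  have hg := (hpos.comp_smul (one_add_X_mem_boxMonoid i)).smul (r := 1 / 2) (by norm_num)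
  have hh := (hpos.comp_smul (one_sub_X_mem_boxMonoid i)).smul (r := 1 / 2) (by norm_num)
  set g := (1 / 2 : ℝ) • (f' ∘ₗ DistribSMul.toLinearMap ℝ
    (Matrix ι ι (MvPolynomial σ ℝ)) (1 + X i : MvPolynomial σ ℝ)) with hgdef
  set h := (1 / 2 : ℝ) • (f' ∘ₗ DistribSMul.toLinearMap ℝ
    (Matrix ι ι (MvPolynomial σ ℝ)) (1 - X i : MvPolynomial σ ℝ)) with hhdef
  have hgX : ∀ H, g H = 1 / 2 * (f' H + f' ((X i : MvPolynomial σ ℝ) • H)) := fun H => by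
    simp [hgdef, add_smul]
  have hsum : g + h = f' := by
    ext1 H
    rw [LinearMap.add_apply, hgX]
    simp only [hhdef, LinearMap.smul_apply, LinearMap.comp_apply, DistribSMul.toLinearMap_apply,
      sub_smul, one_smul, map_sub, smul_eq_mul]
    ring
  have hg1 := hg.apply_one_nonneg hPvec
  have hh1 := hh.apply_one_nonneg hPvec
  have hsum1 : g 1 + h 1 = 1 := by rw [← LinearMap.add_apply, hsum, hf1]
  refine ⟨2 * g 1 - 1, abs_le.2 ⟨by linarith, by linarith⟩, fun H => ?_⟩
  have hgH := congrArg (· H) (hg.eq_smul_of_add_mem_extremePoints hh hPvec (by rwa [hsum]))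
  simp only [hsum, LinearMap.smul_apply, smul_eq_mul] at hgH
  rw [hgX] at hgH
  linarith

end States

section ExtremePoints

variable {σ ι : Type*} [Fintype ι]

/-- The functional `H ↦ ∑ a b, H_ab(c) W_ab` attached to the matrix point mass `W δ_c`. -/
noncomputable def pointFunctional (c : σ → ℝ) (W : Matrix ι ι ℝ)
    (H : Matrix ι ι (MvPolynomial σ ℝ)) : ℝ :=
  ∑ a, ∑ b, evalMat c H a b * W a b

variable [DecidableEq ι] {P : Set (Matrix ι ι (MvPolynomial σ ℝ))}

theorem apply_smul_eq_eval_mul {E : Type*} [AddCommGroup E] [Module (MvPolynomial σ ℝ) E]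
    [Module ℝ E] [IsScalarTower ℝ (MvPolynomial σ ℝ) E] {f : E →ₗ[ℝ] ℝ} {c : σ → ℝ}
    (hX : ∀ i v, f ((X i : MvPolynomial σ ℝ) • v) = c i * f v) (t : MvPolynomial σ ℝ) (v : E) :
    f (t • v) = eval c t * f v := by
  induction t using MvPolynomial.induction_on generalizing v with
  | C r => rw [← algebraMap_eq, algebraMap_smul, map_smul, smul_eq_mul, algebraMap_eq, eval_C]
  | add s t hs ht => rw [add_smul, map_add, hs, ht, map_add, add_mul]
  | mul_X s i hs => rw [mul_smul, hs, hX, map_mul, eval_X, mul_assoc]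

theorem exists_eq_pointFunctional_of_mem_extremePoints
    (hPvec : ∀ v : ι → MvPolynomial σ ℝ, vecMulVec v v ∈ P)
    {φ : Matrix ι ι (MvPolynomial σ ℝ) → ℝ} (hφ : φ ∈ (boxStates P).extremePoints ℝ) :
    ∃ (c : σ → ℝ) (W : Matrix ι ι ℝ), (∀ i, |c i| ≤ 1) ∧ W.IsSymm ∧ W.trace = 1 ∧
      φ = pointFunctional c W := by
  obtain ⟨f, hpos, hf1, rfl⟩ := (mem_extremePoints.1 hφ).1
  choose c hc hcX using exists_apply_X_smul_of_mem_extremePoints hPvec hφ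
  refine ⟨c, Matrix.of fun a b => f (Matrix.single a b 1), hc, ?_, ?_, funext fun H => ?_⟩
  · ext1 a b
    simpa using hpos.transpose (Matrix.single a b 1)
  · rw [← hf1, ← Matrix.sum_single_one, map_sum]
    rfl
  · conv_lhs => rw [Matrix.matrix_eq_sum_single H]
    simp only [map_sum, pointFunctional]
    refine Finset.sum_congr rfl fun a _ => Finset.sum_congr rfl fun b _ => ?_
    rw [Matrix.of_apply, evalMat, Matrix.map_apply, ← apply_smul_eq_eval_mul hcX,
      Matrix.smul_single, smul_eq_mul, mul_one]

theorem nonneg_of_forall_pointFunctional_nonneg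
    (hPsq : ∀ H ∈ P, ∀ t : MvPolynomial σ ℝ, (t * t) • H ∈ P)
    (hPvec : ∀ v : ι → MvPolynomial σ ℝ, vecMulVec v v ∈ P)
    {L : Matrix ι ι (MvPolynomial σ ℝ) →ₗ[ℝ] ℝ}
    (hsymm : ∀ H, L Hᵀ = L H) (hpos : ∀ H ∈ P, 0 ≤ L H)
    (hb : ∀ a b γ, |L (Matrix.single a b (monomial γ 1))| ≤ 1)
    {F : Matrix ι ι (MvPolynomial σ ℝ)}
    (hF : ∀ (c : σ → ℝ) (W : Matrix ι ι ℝ), (∀ i, |c i| ≤ 1) → W.IsSymm → W.trace = 1 →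
      (∀ H ∈ P, 0 ≤ pointFunctional c W H) → 0 ≤ pointFunctional c W F) : 0 ≤ L F := by
  have hL := isBoxPositive_of_abs_le_one hPsq hsymm hpos hb
  rcases (hL.apply_one_nonneg hPvec).eq_or_lt with h1 | h1
  · rw [hL.eq_zero_of_apply_one hPvec h1.symm, LinearMap.zero_apply]
  have hsub : boxStates P ⊆ {φ | 0 ≤ φ F} := by
    rw [← closure_convexHull_extremePoints (isCompact_boxStates hPvec) convex_boxStates]
    refine closure_minimal (convexHull_min (fun φ hφ => ?_) ?_)
      (isClosed_le continuous_const (continuous_apply F))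
    · obtain ⟨c, W, hc, hW, htr, rfl⟩ := exists_eq_pointFunctional_of_mem_extremePoints hPvec hφ
      obtain ⟨f, hf, -, hfW⟩ := (mem_extremePoints.1 hφ).1
      exact hF c W hc hW htr fun H hH => hfW ▸ hf.apply_nonneg hH
    · intro φ hφ ψ hψ a b ha hb _
      exact add_nonneg (mul_nonneg ha hφ) (mul_nonneg hb hψ)
  exact nonneg_of_mul_nonneg_right (hsub (hL.inv_smul_mem_boxStates h1)) (inv_pos.2 h1)

end ExtremePoints

/-! ### Positivity of point functionals -/

section PointFunctional

variable {σ ι : Type*} [Fintype ι] {c : σ → ℝ} {W : Matrix ι ι ℝ}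

theorem pointFunctional_nonneg_of_posSemidef {H : Matrix ι ι (MvPolynomial σ ℝ)}
    (hH : (evalMat c H).PosSemidef) (hW : W.PosSemidef) : 0 ≤ pointFunctional c W H := by
  simpa [pointFunctional, dotProduct, mulVec] using
    (hH.hadamard hW).dotProduct_mulVec_nonneg fun _ => 1

theorem pointFunctional_single [DecidableEq ι] (i : ι) (s : MvPolynomial σ ℝ) :
    pointFunctional c W (Matrix.single i i s) = eval c s * W i i := by
  simp [pointFunctional, evalMat, Matrix.single_apply, ite_and, apply_ite (eval c)]

theorem posSemidef_of_forall_pointFunctional_nonneg (hW : W.IsSymm)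
    (hpos : ∀ S : Matrix ι ι (MvPolynomial σ ℝ), IsSOSMatrix S → 0 ≤ pointFunctional c W S) :
    W.PosSemidef := by
  refine .of_dotProduct_mulVec_nonneg (isHermitian_iff_isSymm.2 hW) fun u => ?_
  refine (hpos _ (.vecMulVec_self fun a => C (u a))).trans_eq ?_
  simp only [pointFunctional, evalMat, Matrix.map_apply, dotProduct, mulVec, Finset.mul_sum,
    vecMulVec_apply, map_mul, eval_C, star_trivial]
  exact Finset.sum_congr rfl fun a _ => Finset.sum_congr rfl fun b _ => by ring

end PointFunctional

theorem lram_vecMulVec_single {R ι κ : Type*} [CommSemiring R] [DecidableEq ι] [Fintype κ] (i : ι)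
    (u : κ → R) (B : Matrix κ κ R) :
    lram (vecMulVec (Function.uncurry (Pi.single i u)) (Function.uncurry (Pi.single i u))) B =
      Matrix.single i i (u ⬝ᵥ B *ᵥ u) := by
  ext1 a b
  rw [Matrix.single_apply]
  split_ifs with h
  · obtain ⟨rfl, rfl⟩ := h
    simp only [lram, of_apply, vecMulVec_apply, Function.uncurry_apply_pair, Pi.single_eq_same,
      dotProduct, mulVec, Finset.mul_sum]
    rw [Finset.sum_comm]
    exact Finset.sum_congr rfl fun r _ => Finset.sum_congr rfl fun s _ => by ring
  · refine Finset.sum_eq_zero fun r _ => Finset.sum_eq_zero fun s _ => ?_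
    rcases not_and_or.1 h with h | h <;>
      simp [vecMulVec_apply, Pi.single_eq_of_ne' h]

theorem eval_dotProduct_mulVec {σ κ : Type*} [Fintype κ] (x : σ → ℝ)
    (u : κ → MvPolynomial σ ℝ) (B : Matrix κ κ (MvPolynomial σ ℝ)) :
    eval x (u ⬝ᵥ B *ᵥ u) = (eval x ∘ u) ⬝ᵥ evalMat x B *ᵥ (eval x ∘ u) := by
  rw [RingHom.map_dotProduct]
  congr 1
  exact funext (RingHom.map_mulVec _ _ _)

section Localization

variable {n m : ℕ} {ι κ : Type*} [Fintype κ] {ν : Measure (Fin m → ℝ)}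
  {G : Matrix κ κ (MvPolynomial (Fin n ⊕ Fin m) ℝ)}

theorem integLram_vecMulVec_single [DecidableEq ι] (i : ι)
    (u : κ → MvPolynomial (Fin n ⊕ Fin m) ℝ) :
    integLram ν (vecMulVec (Function.uncurry (Pi.single i u)) (Function.uncurry (Pi.single i u)))
      G = Matrix.single i i (integY ν (u ⬝ᵥ G *ᵥ u)) := by
  rw [integLram, lram_vecMulVec_single]
  exact Matrix.map_single i i _ (⟨integY ν, by simp [integY]⟩ : ZeroHom _ _)

variable [Fintype ι] {c : Fin n → ℝ} {W : Matrix ι ι ℝ}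

theorem integral_eval_dotProduct_mulVec_nonneg (hmom : momentsFinite ν)
    {i : ι} (hi : 0 < W i i)
    (hpos : ∀ S : Matrix (ι × κ) (ι × κ) (MvPolynomial (Fin n ⊕ Fin m) ℝ),
      IsSOSMatrix S → 0 ≤ pointFunctional c W (integLram ν S G))
    (u : κ → MvPolynomial (Fin n ⊕ Fin m) ℝ) :
    0 ≤ ∫ y, eval (Sum.elim c y) (u ⬝ᵥ G *ᵥ u) ∂ν := by
  classical
  have h := hpos _ (.vecMulVec_self (Function.uncurry (Pi.single i u)))
  rw [integLram_vecMulVec_single, pointFunctional_single, hmom.eval_integY] at h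
  exact nonneg_of_mul_nonneg_left h hi

theorem posSemidef_evalMat_of_forall_pointFunctional_nonneg {Y : Set (Fin m → ℝ)}
    (hsupp : hasSupport ν Y) (hmom : momentsFinite ν) (hcar : Carleman ν) (hG : G.IsSymm)
    {i : ι} (hi : 0 < W i i)
    (hpos : ∀ S : Matrix (ι × κ) (ι × κ) (MvPolynomial (Fin n ⊕ Fin m) ℝ),
      IsSOSMatrix S → 0 ≤ pointFunctional c W (integLram ν S G)) {y : Fin m → ℝ} (hy : y ∈ Y) :
    (evalMat (Sum.elim c y) G).PosSemidef := by
  refine .of_dotProduct_mulVec_nonneg (isHermitian_iff_isSymm.2 (hG.map _)) fun v => ?_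
  set g := (C ∘ v) ⬝ᵥ G *ᵥ (C ∘ v)
  have hg : ∀ y, eval (Sum.elim c y) g = v ⬝ᵥ evalMat (Sum.elim c y) G *ᵥ v := fun y => by
    simp [g, eval_dotProduct_mulVec, Function.comp_def]
  rw [star_trivial, ← hg, ← eval_bind₁_sumElim]
  refine hcar.eval_nonneg_of_forall_integral_sq_mul_nonneg hmom hsupp (fun t => ?_) y hy
  have h := integral_eval_dotProduct_mulVec_nonneg hmom hi hpos
    ((rename Sum.inr t : MvPolynomial (Fin n ⊕ Fin m) ℝ) • (C ∘ v))
  simpa only [mulVec_smul, dotProduct_smul, smul_dotProduct, smul_eq_mul, ← mul_assoc, ← sq,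
    map_mul, map_pow, eval_rename, Sum.elim_comp_inr, eval_bind₁_sumElim] using h

end Localization

theorem perturbative_positivstellensatz_general {n m : ℕ} {ι κ : Type*} [Fintype ι]
    [DecidableEq ι] [Fintype κ] (Y : Set (Fin m → ℝ)) (ν : Measure (Fin m → ℝ))
    (hsupp : hasSupport ν Y) (hmom : momentsFinite ν) (hcar : Carleman ν)
    (G : Matrix κ κ (MvPolynomial (Fin n ⊕ Fin m) ℝ)) (hG : G.IsSymm)
    (F : Matrix ι ι (MvPolynomial (Fin n) ℝ)) (hF : F.IsSymm)
    (hpsd : ∀ x : Fin n → ℝ, (∀ i, |x i| ≤ 1) →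
      (∀ y ∈ Y, (evalMat (Sum.elim x y) G).PosSemidef) → (evalMat x F).PosSemidef) :
    ∀ ε > (0 : ℝ), ∃ ℓ₁ ℓ₂ : ℕ, ∀ d ≥ ℓ₁, ∀ k ≥ ℓ₂,
      HasCert ν G d k (F + ε • perturbMatrix ι (Fin n) d) := by
  intro ε hε
  by_contra! hcert
  obtain ⟨L, hLsymm, hLpos, hLmon, hLF⟩ :=
    exists_functional_of_forall_exists_not_hasCert hmom hG hF fun N => hcert N N
  have hLF_nonneg : 0 ≤ L F := by
    refine nonneg_of_forall_pointFunctional_nonneg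
      (fun H hH t => mul_self_smul_mem_quadraticModule hmom hH t)
      (fun v => (IsSOSMatrix.vecMulVec_self v).mem_quadraticModule) hLsymm hLpos hLmon
      fun c W hc hW htr hpos => ?_
    have hWpsd := posSemidef_of_forall_pointFunctional_nonneg hW fun S hS =>
      hpos S hS.mem_quadraticModule
    obtain ⟨i, -, hi⟩ : ∃ i ∈ Finset.univ, (0 : ℝ) < W i i :=
      Finset.exists_lt_of_sum_lt <| by
        rw [Finset.sum_const_zero]
        exact one_pos.trans_eq htr.symm
    exact pointFunctional_nonneg_of_posSemidef (hpsd c hc fun y =>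
      posSemidef_evalMat_of_forall_pointFunctional_nonneg hsupp hmom hcar hG hi fun S hS =>
        hpos _ (integLram_mem_quadraticModule hS)) hWpsd
  linarith

/-- perturbative Positivstellensatz with universal quantifiers
(Theorem E). -/
theorem perturbative_positivstellensatz {n m p q : ℕ}
    (Y : Set (Fin m → ℝ)) (hY : IsClosed Y)
    (ν : Measure (Fin m → ℝ)) (hsupp : hasSupport ν Y) (hmom : momentsFinite ν)
    (hcar : Carleman ν)
    (G : Matrix (Fin q) (Fin q) (MvPolynomial (Fin n ⊕ Fin m) ℝ)) (hGs : G.IsSymm)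
    (F : Matrix (Fin p) (Fin p) (MvPolynomial (Fin n) ℝ)) (hFs : F.IsSymm)
    (lam : ℝ) (hlam : 0 < lam)
    (O₁ : Set (Fin n → ℝ)) (O₂ : Set (Fin m → ℝ))
    (hO₁o : IsOpen O₁) (hO₁b : Bornology.IsBounded O₁)
    (hO₂o : IsOpen O₂) (hO₂b : Bornology.IsBounded O₂)
    (hO₁X : O₁ ⊆ {x | ∀ y ∈ Y, (evalMat (Sum.elim x y) G).PosSemidef})
    (hO₂Y : O₂ ⊆ Y)
    (hGl : ∀ x ∈ O₁, ∀ y ∈ O₂,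
      ((evalMat (Sum.elim x y) G) - lam • (1 : Matrix (Fin q) (Fin q) ℝ)).PosSemidef)
    (hpsd : ∀ x : Fin n → ℝ, (∀ i, |x i| ≤ 1) →
      (∀ y ∈ Y, (evalMat (Sum.elim x y) G).PosSemidef) → (evalMat x F).PosSemidef) :
    ∀ ε > (0 : ℝ), ∃ ℓ₁ ℓ₂ : ℕ, ∀ d ≥ ℓ₁, ∀ k ≥ ℓ₂,
      ∃ (S0 : Matrix (Fin p) (Fin p) (MvPolynomial (Fin n) ℝ))
        (Sg : Matrix (Fin p × Fin q) (Fin p × Fin q) (MvPolynomial (Fin n ⊕ Fin m) ℝ)),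
        IsSOSMatrix S0 ∧ matDeg S0 ≤ 2 * d ∧
        IsSOSMatrix Sg ∧ matDegX Sg ≤ 2 * d - 2 * ((matDegX G + 1) / 2) ∧
        matDegY Sg ≤ 2 * k ∧
        F + (MvPolynomial.C ε *
            ((1 : MvPolynomial (Fin n) ℝ) + ∑ i, X i ^ (2 * d))) •
            (1 : Matrix (Fin p) (Fin p) (MvPolynomial (Fin n) ℝ)) =
          S0 + (lram Sg G).map (integY ν) := by
  simpa only [HasCert, integLram, smul_perturbMatrix, perturb] using
    perturbative_positivstellensatz_general Y ν hsupp hmom hcar G hGs F hFs hpsd
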